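/- arXiv:2402.05695 — 3 statements merged into one kernel-verified Lean document; each statement's English description precedes it below -/
import Mathlib

section
/- Fix a type ℓ and a vector of slopes ρ ∈ R^ℓ. Let (b, τ) ∈ B^ℓ × ℝ^m be such that the self-similar IFS generated by F^{(b,τ,ρ)} satisfies the Exponential Separation Condition and s_{(b,τ,ρ)} > 1. Then there exists δ > 0 such that for every (b̂, τ̂) ∈ B^ℓ × ℝ^m with |(b̂, τ̂) − (b, τ)| < δ one has s_{(b̂,τ̂,ρ)} > 1. -/
open Set Filter MeasureTheory

noncomputable section

/-- Composition `f_{i₁} ∘ ⋯ ∘ f_{iₙ}` of a family of maps of `ℝ` along a finite word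
(the empty composition being the identity). -/
def compFam {ι : Type*} (S : ι → ℝ → ℝ) (w : List ι) : ℝ → ℝ :=
  w.foldr (fun k g => S k ∘ g) id

/-- A family of maps of `ℝ` has *no exact overlapping* if for every `n ≥ 1` and all words
`ī, j̄` of length `n`, equality of the compositions `S_ī = S_j̄` (as functions) implies
`ī = j̄`. -/
def NoExactOverlap {ι : Type*} (S : ι → ℝ → ℝ) : Prop :=
  ∀ n : ℕ, 1 ≤ n → ∀ i j : Fin n → ι,
    compFam S (List.ofFn i) = compFam S (List.ofFn j) → i = j

/-- The supporting interval `I` of the system `{f_1, …, f_m}`:  if the maps have a common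
fixed point `φ` (i.e. the attractor is the single point `φ`) it is `[φ - 1/2, φ + 1/2]`;
otherwise it is the smallest nonempty compact interval sent into itself by all the maps,
i.e. the intersection of all such intervals. -/
def suppInt {m : ℕ} (f : Fin m → ℝ → ℝ) : Set ℝ :=
  haveI := Classical.propDecidable (∃ φ : ℝ, ∀ k, f k φ = φ)
  if h : ∃ φ : ℝ, ∀ k, f k φ = φ then
    Set.Icc (h.choose - 1 / 2) (h.choose + 1 / 2)
  else
    ⋂₀ {J : Set ℝ | J.Nonempty ∧ (∃ a b : ℝ, J = Set.Icc a b) ∧ ∀ k, f k '' J ⊆ J}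

/-- The natural pressure function
`Φ(s) = limsup_{n → ∞} (1/n) log ∑_{(i₁,…,iₙ)} |I_{i₁…iₙ}|ˢ`. -/
def pressure {m : ℕ} (f : Fin m → ℝ → ℝ) (s : ℝ) : ℝ :=
  Filter.limsup
    (fun n : ℕ =>
      (n : ℝ)⁻¹ * Real.log (∑ w : Fin n → Fin m,
        Metric.diam (compFam f (List.ofFn w) '' suppInt f) ^ s))
    Filter.atTop

/-- The index of the interval of linearity (determined by the breaking points `b`) in which
the point `u` lies: the number of breaking points lying below `u`. -/
def slopeIdx {lk : ℕ} (b : Fin lk → ℝ) (u : ℝ) : Fin (lk + 1) :=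
  ⟨(Finset.univ.filter fun j : Fin lk => b j < u).card,
   Nat.lt_succ_of_le (le_trans (Finset.card_filter_le _ _) (by simp))⟩

/-- The continuous piecewise linear function with breaking points `b`, slope `ρ i` on the
`i`-th interval of linearity, and value `τ` at `0`:  `x ↦ τ + ∫_0^x (slope at u) du`. -/
def plFun {lk : ℕ} (b : Fin lk → ℝ) (ρ : Fin (lk + 1) → ℝ) (τ : ℝ) (x : ℝ) : ℝ :=
  τ + ∫ u in (0 : ℝ)..x, ρ (slopeIdx b u)

variable (m : ℕ) (l : Fin m → ℕ)

/-- The space `ℝ^L` of breaking point data of type `ℓ`. -/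
abbrev BSpace := (k : Fin m) → Fin (l k) → ℝ

/-- The space `ℝ^{L+m}` of slope data of type `ℓ`. -/
abbrev RSpace := (k : Fin m) → Fin (l k + 1) → ℝ

/-- The full parameter space `ℝ^L × ℝ^m × ℝ^{L+m}` of CPLIFSs of type `ℓ`:
breaking points, vertical translations and slopes. -/
abbrev Param := BSpace m l × (Fin m → ℝ) × RSpace m l

/-- The family of piecewise linear maps `{f_1, …, f_m}` determined by a parameter
vector `(b, τ, ρ)`. -/
def paramFun (p : Param m l) : Fin m → ℝ → ℝ :=
  fun k => plFun (p.1 k) (p.2.2 k) (p.2.1 k)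

/-- The set `Γ^ℓ` of admissible parameter vectors: breaking points strictly increasing,
slopes nonzero of modulus `< 1`, and consecutive slopes of each map distinct. -/
def Gamma : Set (Param m l) :=
  {p | (∀ k, StrictMono (p.1 k)) ∧
       (∀ k i, p.2.2 k i ≠ 0 ∧ |p.2.2 k i| < 1) ∧
       (∀ k (i : Fin (l k)), p.2.2 k i.castSucc ≠ p.2.2 k i.succ)}

/-- The natural dimension of the CPLIFS with parameter vector `p`: the (unique) nonnegative
zero of the natural pressure function, i.e. `inf {s ≥ 0 | Φ_p(s) ≤ 0}`. -/
def natDim (p : Param m l) : ℝ :=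
  sInf {s : ℝ | 0 ≤ s ∧ pressure (paramFun m l p) s ≤ 0}

/-- A family of affine contractions `x ↦ r p * x + t p` satisfies the *Exponential
Separation Condition* if there are `c > 0` and a strictly increasing sequence `(n_L)` of
naturals such that for every `L` and all distinct words `ī ≠ j̄` of length `n_L`, the
compositions `S_ī` and `S_j̄` either have different slopes or satisfy
`|S_ī(0) - S_j̄(0)| ≥ c ^ (n_L)`. -/
def ESCfam {ι : Type*} (r t : ι → ℝ) : Prop :=
  ∃ c : ℝ, 0 < c ∧ ∃ nl : ℕ → ℕ, StrictMono nl ∧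
    ∀ L : ℕ, ∀ i j : Fin (nl L) → ι, i ≠ j →
      ((∏ q, r (i q)) ≠ ∏ q, r (j q)) ∨
      c ^ nl L ≤
        |compFam (fun p x => r p * x + t p) (List.ofFn i) 0 -
         compFam (fun p x => r p * x + t p) (List.ofFn j) 0|

/-!
Let `a n` be the largest factor by which `n` steps of the system multiply the total length of a
compact subinterval of `I`. This sequence is submultiplicative, and natural dimension greater than
one forces it to grow exponentially, at some rate `L > 0`. Without exact overlaps, at most one word
of each length fixes a given breaking point `β`; an orbit can revisit a small neighbourhood of `β`
only by following words that fix `β`, so by a Chernoff bound the words with many visits near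
breaking points carry little length, and the length `∑ |f_w(U)|` still grows like `exp (L n / 2)`
when every visit is penalized by a constant factor. Away from the breaking points a nearby system
has the same slopes, and a visit costs it at most that constant factor. Hence the total length of
the cylinders of the nearby system grows exponentially, which makes its pressure positive on
`[0, 1]`.
-/

/-! ### Words and compositions -/

section Words

variable {κ : Type*} [Fintype κ]

variable (κ) in
/-- The finite set of all words of length `n` over the alphabet `κ`. -/
def wordsOfLength (n : ℕ) : Finset (List κ) :=
  Finset.univ.map ⟨fun w : Fin n → κ => List.ofFn w, List.ofFn_injective⟩

@[simp]
theorem mem_wordsOfLength {n : ℕ} {w : List κ} : w ∈ wordsOfLength κ n ↔ w.length = n := by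
  simp only [wordsOfLength, Finset.mem_map, Finset.mem_univ, true_and, Function.Embedding.coeFn_mk]
  constructor
  · rintro ⟨w, rfl⟩
    exact List.length_ofFn
  · rintro rfl
    exact ⟨w.get, List.ofFn_get w⟩

theorem sum_wordsOfLength {M : Type*} [AddCommMonoid M] (n : ℕ) (g : List κ → M) :
    ∑ w ∈ wordsOfLength κ n, g w = ∑ w : Fin n → κ, g (List.ofFn w) :=
  Finset.sum_map _ _ _

theorem sum_wordsOfLength_add {M : Type*} [AddCommMonoid M] (p q : ℕ) (g : List κ → M) :
    ∑ w ∈ wordsOfLength κ (p + q), g w =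
      ∑ u ∈ wordsOfLength κ p, ∑ v ∈ wordsOfLength κ q, g (u ++ v) := by
  simp only [sum_wordsOfLength]
  rw [← Fintype.sum_prod_type', ← (Fin.appendEquiv p q).sum_comp]
  exact Finset.sum_congr rfl fun w _ => by rw [← List.ofFn_fin_append]; rfl

@[simp]
theorem card_wordsOfLength (n : ℕ) : (wordsOfLength κ n).card = Fintype.card κ ^ n := by
  simp [wordsOfLength]

end Words

section Composition

variable {ι : Type*} {S : ι → ℝ → ℝ}

@[simp]
theorem compFam_nil (S : ι → ℝ → ℝ) : compFam S [] = id := rfl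

theorem compFam_cons (S : ι → ℝ → ℝ) (k : ι) (w : List ι) :
    compFam S (k :: w) = S k ∘ compFam S w := rfl

theorem compFam_append (S : ι → ℝ → ℝ) (u v : List ι) :
    compFam S (u ++ v) = compFam S u ∘ compFam S v := by
  induction u with
  | nil => rfl
  | cons k u ih => rw [List.cons_append, compFam_cons, compFam_cons, ih, Function.comp_assoc]

theorem lipschitzWith_compFam {r : NNReal} (hS : ∀ k, LipschitzWith r (S k)) (w : List ι) :
    LipschitzWith (r ^ w.length) (compFam S w) := by
  induction w with
  | nil => simpa using LipschitzWith.id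
  | cons k w ih =>
    rw [compFam_cons, List.length_cons, pow_succ']
    exact (hS k).comp ih

theorem lipschitzWith_one_compFam (hS : ∀ k, LipschitzWith 1 (S k)) (w : List ι) :
    LipschitzWith 1 (compFam S w) := by
  simpa using lipschitzWith_compFam hS w

theorem mapsTo_compFam {I : Set ℝ} (hI : ∀ k, MapsTo (S k) I I) (w : List ι) :
    MapsTo (compFam S w) I I := by
  induction w with
  | nil => exact mapsTo_id I
  | cons k w ih => exact (hI k).comp ih

theorem diam_compFam_image_le {r : NNReal} (hS : ∀ k, LipschitzWith r (S k)) (w : List ι)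
    {U : Set ℝ} (hU : Bornology.IsBounded U) :
    Metric.diam (compFam S w '' U) ≤ r ^ w.length * Metric.diam U := by
  simpa using (lipschitzWith_compFam hS w).diam_image_le U hU

theorem dist_compFam_le {S' : ι → ℝ → ℝ} {r : NNReal} {D : ℝ} (hS : ∀ k, LipschitzWith r (S k))
    (hSS' : ∀ k x, dist (S k x) (S' k x) ≤ (1 - r) * D) (w : List ι) {x x' : ℝ}
    (hx : dist x x' ≤ D) : dist (compFam S w x) (compFam S' w x') ≤ D := by
  induction w with
  | nil => exact hx
  | cons k w ih =>
    calc dist (S k (compFam S w x)) (S' k (compFam S' w x'))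
        ≤ dist (S k (compFam S w x)) (S k (compFam S' w x')) +
          dist (S k (compFam S' w x')) (S' k (compFam S' w x')) := dist_triangle _ _ _
      _ ≤ r * D + (1 - r) * D :=
          add_le_add (((hS k).dist_le_mul _ _).trans (by gcongr)) (hSS' k _)
      _ = D := by ring

end Composition

/-! ### Total length of the cylinders over a subinterval -/

/-- `U` is a nonempty compact subinterval of `I` (possibly a single point). -/
structure IsSubinterval (I U : Set ℝ) : Prop where
  isCompact : IsCompact U
  isConnected : IsConnected U
  subset : U ⊆ I

namespace IsSubinterval

variable {I U : Set ℝ}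

theorem isBounded (hU : IsSubinterval I U) : Bornology.IsBounded U := hU.isCompact.isBounded

theorem exists_eq_Icc (hU : IsSubinterval I U) : ∃ p q, p ≤ q ∧ U = Icc p q := by
  have h := eq_Icc_of_connected_compact hU.isConnected hU.isCompact
  refine ⟨sInf U, sSup U, ?_, h⟩
  exact nonempty_Icc.1 (h ▸ hU.isConnected.nonempty)

theorem image (hU : IsSubinterval I U) {f : ℝ → ℝ} (hf : Continuous f) (hI : MapsTo f I I) :
    IsSubinterval I (f '' U) :=
  ⟨hU.isCompact.image hf, hU.isConnected.image f hf.continuousOn,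
    (hI.mono_left hU.subset).image_subset⟩

theorem image_compFam {ι : Type*} {S : ι → ℝ → ℝ} (hU : IsSubinterval I U)
    (hS : ∀ k, LipschitzWith 1 (S k)) (hI : ∀ k, MapsTo (S k) I I) (w : List ι) :
    IsSubinterval I (compFam S w '' U) :=
  hU.image (lipschitzWith_one_compFam hS w).continuous (mapsTo_compFam hI w)

end IsSubinterval

theorem isSubinterval_Icc {I : Set ℝ} {p q : ℝ} (hpq : p ≤ q) (h : Icc p q ⊆ I) :
    IsSubinterval I (Icc p q) :=
  ⟨isCompact_Icc, isConnected_Icc hpq, h⟩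

theorem mul_diam_compFam_image_le {ι : Type*} {S : ι → ℝ → ℝ} {I U : Set ℝ} {c : ℝ}
    (hS : ∀ k, LipschitzWith 1 (S k))
    (hlow : ∀ k p q, p ≤ q → c * (q - p) ≤ Metric.diam (S k '' Icc p q))
    (hU : IsSubinterval I U) (k : ι) (w : List ι) :
    c * Metric.diam (compFam S w '' U) ≤ Metric.diam (compFam S (k :: w) '' U) := by
  have hU' : IsSubinterval univ U := ⟨hU.isCompact, hU.isConnected, subset_univ U⟩
  obtain ⟨p, q, hpq, himage⟩ :=
    (hU'.image_compFam hS (fun k => mapsTo_univ (S k) univ) w).exists_eq_Icc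
  rw [compFam_cons, image_comp, himage, Real.diam_Icc hpq]
  exact hlow k p q hpq

section Growth

variable {κ : Type*} [Fintype κ] {S : κ → ℝ → ℝ} {I U : Set ℝ}

/-- The total length `∑ |S_w(U)|` of the images of `U` under the compositions along the words
`w` of length `n`. -/
def totalLength (S : κ → ℝ → ℝ) (n : ℕ) (U : Set ℝ) : ℝ :=
  ∑ w ∈ wordsOfLength κ n, Metric.diam (compFam S w '' U)

/-- The worst factor by which `n` steps of the system `S` can multiply the total length of a
compact subinterval of `I`. Subintervals of length zero contribute the harmless value `0`. -/
def lengthGrowth (S : κ → ℝ → ℝ) (I : Set ℝ) (n : ℕ) : ℝ :=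
  sSup ((fun U => totalLength S n U / Metric.diam U) '' {U | IsSubinterval I U})

theorem totalLength_nonneg (S : κ → ℝ → ℝ) (n : ℕ) (U : Set ℝ) : 0 ≤ totalLength S n U :=
  Finset.sum_nonneg fun _ _ => Metric.diam_nonneg

theorem totalLength_add (S : κ → ℝ → ℝ) (p q : ℕ) (U : Set ℝ) :
    totalLength S (p + q) U =
      ∑ v ∈ wordsOfLength κ q, totalLength S p (compFam S v '' U) := by
  simp only [totalLength, sum_wordsOfLength_add, compFam_append, image_comp]
  exact Finset.sum_comm

theorem totalLength_le_card_pow_mul_diam (hS : ∀ k, LipschitzWith 1 (S k)) (n : ℕ)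
    (hU : Bornology.IsBounded U) :
    totalLength S n U ≤ (Fintype.card κ : ℝ) ^ n * Metric.diam U := by
  calc totalLength S n U ≤ ∑ _w ∈ wordsOfLength κ n, Metric.diam U :=
        Finset.sum_le_sum fun w _ => by simpa using diam_compFam_image_le hS w hU
    _ = (Fintype.card κ : ℝ) ^ n * Metric.diam U := by simp

theorem lengthGrowth_nonneg (S : κ → ℝ → ℝ) (I : Set ℝ) (n : ℕ) : 0 ≤ lengthGrowth S I n := by
  refine Real.sSup_nonneg ?_
  rintro _ ⟨U, -, rfl⟩
  exact div_nonneg (totalLength_nonneg S n U) Metric.diam_nonneg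

theorem totalLength_le_lengthGrowth_mul_diam (hS : ∀ k, LipschitzWith 1 (S k)) (n : ℕ)
    (hU : IsSubinterval I U) : totalLength S n U ≤ lengthGrowth S I n * Metric.diam U := by
  have hbdd : BddAbove ((fun U => totalLength S n U / Metric.diam U) ''
      {U | IsSubinterval I U}) := by
    refine ⟨(Fintype.card κ : ℝ) ^ n, ?_⟩
    rintro _ ⟨V, hV, rfl⟩
    exact div_le_of_le_mul₀ Metric.diam_nonneg (by positivity)
      (totalLength_le_card_pow_mul_diam hS n hV.isBounded)
  rcases (Metric.diam_nonneg (s := U)).eq_or_lt with hd | hd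
  · simpa [← hd] using totalLength_le_card_pow_mul_diam hS n hU.isBounded
  · exact (div_le_iff₀ hd).1 (le_csSup hbdd (mem_image_of_mem _ hU))

theorem lengthGrowth_le {n : ℕ} {C : ℝ} (hC : 0 ≤ C)
    (h : ∀ U, IsSubinterval I U → totalLength S n U ≤ C * Metric.diam U) :
    lengthGrowth S I n ≤ C := by
  refine Real.sSup_le ?_ hC
  rintro _ ⟨U, hU, rfl⟩
  exact div_le_of_le_mul₀ Metric.diam_nonneg hC (h U hU)

theorem lengthGrowth_add_le (hS : ∀ k, LipschitzWith 1 (S k)) (hI : ∀ k, MapsTo (S k) I I)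
    (p q : ℕ) : lengthGrowth S I (p + q) ≤ lengthGrowth S I p * lengthGrowth S I q := by
  have hnonneg := lengthGrowth_nonneg S I
  refine lengthGrowth_le (mul_nonneg (hnonneg p) (hnonneg q)) fun U hU => ?_
  calc totalLength S (p + q) U
      = ∑ v ∈ wordsOfLength κ q, totalLength S p (compFam S v '' U) := totalLength_add S p q U
    _ ≤ ∑ v ∈ wordsOfLength κ q, lengthGrowth S I p * Metric.diam (compFam S v '' U) :=
        Finset.sum_le_sum fun v _ =>
          totalLength_le_lengthGrowth_mul_diam hS p (hU.image_compFam hS hI v)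
    _ = lengthGrowth S I p * totalLength S q U := by rw [← Finset.mul_sum, totalLength]
    _ ≤ lengthGrowth S I p * (lengthGrowth S I q * Metric.diam U) :=
        mul_le_mul_of_nonneg_left (totalLength_le_lengthGrowth_mul_diam hS q hU) (hnonneg p)
    _ = lengthGrowth S I p * lengthGrowth S I q * Metric.diam U := by ring

theorem totalLength_Icc_le_add {p t q : ℝ} (n : ℕ) (hpt : p ≤ t) (htq : t ≤ q) :
    totalLength S n (Icc p q) ≤ totalLength S n (Icc p t) + totalLength S n (Icc t q) := by
  simp only [totalLength, ← Finset.sum_add_distrib]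
  refine Finset.sum_le_sum fun w _ => ?_
  rw [← Icc_union_Icc_eq_Icc hpt htq, image_union]
  exact Metric.diam_union' ⟨compFam S w t, mem_image_of_mem _ (right_mem_Icc.2 hpt),
    mem_image_of_mem _ (left_mem_Icc.2 htq)⟩

theorem le_mul_sub_of_subadditive_of_short {g : ℝ → ℝ → ℝ} {a b u C : ℝ} (hu : 0 < u)
    (hadd : ∀ p t q, a ≤ p → p ≤ t → t ≤ q → q ≤ b → g p q ≤ g p t + g t q)
    (hshort : ∀ p q, a ≤ p → p ≤ q → q ≤ b → q - p ≤ u → g p q ≤ C * (q - p)) (hab : a ≤ b) :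
    g a b ≤ C * (b - a) := by
  have key : ∀ j : ℕ, ∀ p q, a ≤ p → p ≤ q → q ≤ b → q - p ≤ 2 ^ j * u →
      g p q ≤ C * (q - p) := by
    intro j
    induction j with
    | zero => exact fun p q hp hpq hq hlen => hshort p q hp hpq hq (by simpa using hlen)
    | succ j ih =>
      intro p q hp hpq hq hlen
      rw [pow_succ] at hlen
      have hleft := ih p ((p + q) / 2) hp (by linarith) (by linarith) (by linarith)
      have hright := ih ((p + q) / 2) q (by linarith) (by linarith) hq (by linarith)
      have := hadd p ((p + q) / 2) q hp (by linarith) (by linarith) hq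
      linarith
  obtain ⟨j, hj⟩ := pow_unbounded_of_one_lt ((b - a) / u) one_lt_two
  exact key j a b le_rfl hab le_rfl ((div_lt_iff₀ hu).1 hj).le

theorem exists_short_subinterval_of_lt_lengthGrowth {n : ℕ} {u C : ℝ} (hu : 0 < u) (hC : 0 ≤ C)
    (hCn : C < lengthGrowth S I n) :
    ∃ U, IsSubinterval I U ∧ 0 < Metric.diam U ∧ Metric.diam U ≤ u ∧
      C * Metric.diam U ≤ totalLength S n U := by
  by_contra! hcon
  refine absurd (lengthGrowth_le hC fun U hU => ?_) hCn.not_ge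
  obtain ⟨a, b, hab, rfl⟩ := hU.exists_eq_Icc
  rw [Real.diam_Icc hab]
  refine le_mul_sub_of_subadditive_of_short (g := fun p q => totalLength S n (Icc p q)) hu
    (fun p t q _ hpt htq _ => totalLength_Icc_le_add n hpt htq) (fun p q hap hpq hqb hlen => ?_) hab
  rcases hpq.eq_or_lt with rfl | hlt
  · simp [totalLength]
  · have hpos : 0 < Metric.diam (Icc p q) := by rwa [Real.diam_Icc hpq, sub_pos]
    have hsub := isSubinterval_Icc hpq ((Icc_subset_Icc hap hqb).trans hU.subset)
    have := (hcon _ hsub hpos (by rwa [Real.diam_Icc hpq])).le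
    rwa [Real.diam_Icc hpq] at this

end Growth

section Submultiplicative

variable {a : ℕ → ℝ} {ε K : ℝ}

theorem pos_of_submultiplicative_of_frequently_pos (ha : ∀ n, 0 ≤ a n)
    (hmul : ∀ p q, a (p + q) ≤ a p * a q) (hfreq : ∃ᶠ n in atTop, 0 < a n) (n : ℕ) :
    0 < a n := by
  by_contra hn
  obtain ⟨p, hp, hnp⟩ := (hfreq.and_eventually (eventually_ge_atTop n)).exists
  obtain ⟨q, rfl⟩ := Nat.exists_eq_add_of_le hnp
  exact hp.not_ge ((hmul n q).trans (mul_nonpos_of_nonpos_of_nonneg (not_lt.1 hn) (ha q)))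

theorem le_div_of_subadditive_of_frequently_add_mul_le {u : ℕ → ℝ} (hu : Subadditive u) {A : ℝ}
    (hfreq : ∃ᶠ n : ℕ in atTop, A + ε * n ≤ u n) {n : ℕ} (hn : n ≠ 0) : ε ≤ u n / n := by
  by_contra! hlt
  obtain ⟨μ, hμ, hμε⟩ := exists_between hlt
  have hlim : Tendsto (fun p : ℕ => A / p) atTop (nhds 0) :=
    tendsto_const_div_atTop_nhds_zero_nat A
  have hlarge := hlim.eventually_const_lt (sub_neg.2 hμε)
  obtain ⟨p, hAp, hup, hAp', hp⟩ := (hfreq.and_eventually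
    ((hu.eventually_div_lt_of_div_lt hn hμ).and (hlarge.and (eventually_gt_atTop 0)))).exists
  have hp' : (0 : ℝ) < p := Nat.cast_pos.2 hp
  rw [div_lt_iff₀ hp'] at hup
  rw [lt_div_iff₀ hp'] at hAp'
  linarith

theorem exists_le_mul_exp_of_tendsto_log_div (hpos : ∀ n, 0 < a n) {L θ : ℝ}
    (hlim : Tendsto (fun n : ℕ => Real.log (a n) / n) atTop (nhds L)) (hθ : 0 < θ) :
    ∃ C ≥ 0, ∀ n : ℕ, a n ≤ C * Real.exp ((L + θ) * n) := by
  have hev : ∀ᶠ n : ℕ in atTop, a n / Real.exp ((L + θ) * n) ≤ 1 := by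
    filter_upwards [hlim.eventually_lt_const (lt_add_of_pos_right _ hθ),
      eventually_gt_atTop 0] with n hn hn0
    rw [div_lt_iff₀ (Nat.cast_pos.2 hn0)] at hn
    exact div_le_one_of_le₀ ((Real.log_le_iff_le_exp (hpos n)).1 hn.le) (Real.exp_pos _).le
  obtain ⟨C, hC⟩ := (isBoundedUnder_of_eventually_le hev).bddAbove_range
  have hC' := fun n => (div_le_iff₀ (Real.exp_pos _)).1 (hC (mem_range_self n))
  have h0 := (hpos 0).le.trans (hC' 0)
  exact ⟨C, by simpa using h0, hC'⟩

theorem exists_growth_rate_of_submultiplicative (ha : ∀ n, 0 ≤ a n)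
    (hmul : ∀ p q, a (p + q) ≤ a p * a q) (hε : 0 < ε) (hK : 0 < K)
    (hfreq : ∃ᶠ n : ℕ in atTop, K * Real.exp (ε * n) ≤ a n) :
    ∃ L : ℝ, 0 < L ∧ (∀ n : ℕ, Real.exp (L * n) ≤ a n) ∧
      ∀ θ > 0, ∃ C ≥ 0, ∀ n : ℕ, a n ≤ C * Real.exp ((L + θ) * n) := by
  have hpos := pos_of_submultiplicative_of_frequently_pos ha hmul
    (hfreq.mono fun n hn => lt_of_lt_of_le (by positivity) hn)
  have hsub : Subadditive fun n => Real.log (a n) := fun p q => by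
    rw [← Real.log_mul (hpos p).ne' (hpos q).ne']
    exact Real.log_le_log (hpos _) (hmul p q)
  have hlogK : ∃ᶠ n : ℕ in atTop, Real.log K + ε * n ≤ Real.log (a n) :=
    hfreq.mono fun n hn => by
      rwa [Real.le_log_iff_exp_le (hpos n), Real.exp_add, Real.exp_log hK]
  have hrate : ∀ n : ℕ, n ≠ 0 → ε ≤ Real.log (a n) / n := fun n =>
    le_div_of_subadditive_of_frequently_add_mul_le hsub hlogK
  have hbdd : BddBelow (range fun n : ℕ => Real.log (a n) / n) := by
    refine ⟨0, forall_mem_range.2 fun n => ?_⟩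
    rcases eq_or_ne n 0 with rfl | hn
    · simp
    · exact hε.le.trans (hrate n hn)
  have hlim := hsub.tendsto_lim hbdd
  refine ⟨hsub.lim, hε.trans_le (ge_of_tendsto hlim ?_), fun n => ?_, fun θ hθ => ?_⟩
  · exact (eventually_ne_atTop 0).mono hrate
  · rcases n.eq_zero_or_pos with rfl | hn
    · have := hmul 0 0
      simpa using (le_mul_iff_one_le_left (hpos 0)).1 this
    · have := hsub.lim_le_div hbdd hn.ne'
      rwa [le_div_iff₀ (Nat.cast_pos.2 hn), Real.le_log_iff_exp_le (hpos n)] at this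
  · exact exists_le_mul_exp_of_tendsto_log_div hpos hlim hθ

end Submultiplicative

/-! ### Visits to a neighbourhood of a point -/

section Visits

variable {ι : Type*} {S : ι → ℝ → ℝ} {β η : ℝ} {N : ℕ}

open Classical in
/-- The number of times the orbit of `x` along the word `w` (the maps being applied from the last
letter of `w` to the first, and the endpoint of the orbit not being counted) is within distance
`η` of `β`. -/
def visits (S : ι → ℝ → ℝ) (β η x : ℝ) : List ι → ℕ
  | [] => 0
  | _ :: w => visits S β η x w + if dist (compFam S w x) β ≤ η then 1 else 0

theorem visits_append (S : ι → ℝ → ℝ) (β η x : ℝ) (u v : List ι) :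
    visits S β η x (u ++ v) = visits S β η x v + visits S β η (compFam S v x) u := by
  induction u with
  | nil => simp [visits]
  | cons k u ih =>
    rw [List.cons_append, visits, visits, ih, compFam_append, Function.comp_apply, add_assoc]

theorem visits_le_length (S : ι → ℝ → ℝ) (β η x : ℝ) (w : List ι) :
    visits S β η x w ≤ w.length := by
  induction w with
  | nil => exact le_rfl
  | cons k w ih => rw [visits, List.length_cons]; split_ifs <;> omega

/-- Words of length at most `N` that do not fix `β` move `β` by more than `2 * η`. -/
def IsReturnGap (S : ι → ℝ → ℝ) (β η : ℝ) (N : ℕ) : Prop :=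
  ∀ w : List ι, w.length ≤ N → dist (compFam S w β) β ≤ 2 * η → compFam S w β = β

theorem eventually_isReturnGap [Finite ι] (S : ι → ℝ → ℝ) (β : ℝ) (N : ℕ) :
    ∀ᶠ η in nhdsWithin 0 (Ioi 0), IsReturnGap S β η N := by
  refine ((List.finite_length_le ι N).eventually_all (p := fun w η =>
    dist (compFam S w β) β ≤ 2 * η → compFam S w β = β)).2 fun w _ => ?_
  by_cases hw : compFam S w β = β
  · exact Eventually.of_forall fun _ _ => hw
  · filter_upwards [Ioo_mem_nhdsGT (half_pos (dist_pos.2 hw))] with η hη hle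
    exact absurd hη.2 (by linarith)

theorem IsReturnGap.compFam_eq_of_dist_le (hgap : IsReturnGap S β η N)
    (hS : ∀ k, LipschitzWith 1 (S k)) {w : List ι} (hw : w.length ≤ N) {x : ℝ}
    (hx : dist x β ≤ η) (hwx : dist (compFam S w x) β ≤ η) : compFam S w β = β := by
  refine hgap w hw ?_
  have := (lipschitzWith_one_compFam hS w).dist_le_mul β x
  rw [NNReal.coe_one, one_mul, dist_comm β x] at this
  linarith [dist_triangle (compFam S w β) (compFam S w x) β]

theorem IsReturnGap.exists_fixing_suffix (hgap : IsReturnGap S β η N)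
    (hS : ∀ k, LipschitzWith 1 (S k)) {x : ℝ} (hx : dist x β ≤ η) (w : List ι)
    (hw : w.length ≤ N) :
    ∃ u v, w = u ++ v ∧ compFam S v β = β ∧ visits S β η x w ≤ v.length + 1 := by
  induction w with
  | nil => exact ⟨[], [], rfl, rfl, Nat.zero_le _⟩
  | cons k w ih =>
    have hw' : w.length ≤ N := (Nat.le_succ _).trans hw
    by_cases hvisit : dist (compFam S w x) β ≤ η
    · exact ⟨[k], w, rfl, hgap.compFam_eq_of_dist_le hS hw' hx hvisit,
        visits_le_length S β η x (k :: w)⟩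
    · obtain ⟨u, v, rfl, hv, hle⟩ := ih hw'
      exact ⟨k :: u, v, rfl, hv, by simpa [visits, hvisit] using hle⟩

/-- The block `v` runs from the first visit of the orbit to the last one. -/
theorem IsReturnGap.exists_fixing_factor (hgap : IsReturnGap S β η N)
    (hS : ∀ k, LipschitzWith 1 (S k)) (x : ℝ) (w : List ι) (hw : w.length ≤ N) :
    ∃ u v q, w = u ++ (v ++ q) ∧ compFam S v β = β ∧ visits S β η x w ≤ v.length + 1 := by
  induction w using List.reverseRecOn generalizing x with
  | nil => exact ⟨[], [], [], rfl, rfl, Nat.zero_le _⟩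
  | append_singleton w k ih =>
    by_cases hx : dist x β ≤ η
    · obtain ⟨u, v, huv, hv, hle⟩ := hgap.exists_fixing_suffix hS hx _ hw
      exact ⟨u, v, [], by simpa using huv, hv, hle⟩
    · have hvisits : visits S β η x (w ++ [k]) = visits S β η (S k x) w := by
        simp [visits_append, visits, hx, compFam_cons]
      obtain ⟨u, v, q, rfl, hv, hle⟩ := ih (S k x) (by rw [List.length_append] at hw; omega)
      exact ⟨u, v, q ++ [k], by simp, hv, hvisits ▸ hle⟩

end Visits

section WeightedLength

variable {κ : Type*} [Fintype κ] {S : κ → ℝ → ℝ} {I U : Set ℝ} {β η : ℝ} {N : ℕ}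

/-- The total length of the images of `U` along words of length `n`, where the word `w` has
weight `z ^ k` if the orbit of `x` along `w` visits the `η`-neighbourhood of `β` exactly `k`
times. -/
def visitWeightedLength (S : κ → ℝ → ℝ) (β η z x : ℝ) (n : ℕ) (U : Set ℝ) : ℝ :=
  ∑ w ∈ wordsOfLength κ n, Metric.diam (compFam S w '' U) * z ^ visits S β η x w

open Classical in
/-- The words of length `n` whose composition fixes `β`. -/
def fixingWords (S : κ → ℝ → ℝ) (β : ℝ) (n : ℕ) : Finset (List κ) :=
  {v ∈ wordsOfLength κ n | compFam S v β = β}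

theorem mem_fixingWords {n : ℕ} {v : List κ} :
    v ∈ fixingWords S β n ↔ v.length = n ∧ compFam S v β = β := by
  simp [fixingWords]

theorem sum_le_sum_of_exists_fiber {α γ : Type*} {s : Finset α} {t : Finset γ}
    {f : α → ℝ} {g : γ → ℝ} (e : γ → α) (hg : ∀ c ∈ t, 0 ≤ g c)
    (h : ∀ a ∈ s, ∃ c ∈ t, e c = a ∧ f a ≤ g c) : ∑ a ∈ s, f a ≤ ∑ c ∈ t, g c := by
  classical
  have hfiber : ∀ a, ∀ c ∈ t.filter (e · = a), 0 ≤ g c := fun a c hc =>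
    hg c (Finset.mem_filter.1 hc).1
  calc ∑ a ∈ s, f a ≤ ∑ a ∈ s, ∑ c ∈ t with e c = a, g c := by
        refine Finset.sum_le_sum fun a ha => ?_
        obtain ⟨c, hc, hca, hle⟩ := h a ha
        exact hle.trans (Finset.single_le_sum (hfiber a) (Finset.mem_filter.2 ⟨hc, hca⟩))
    _ ≤ ∑ c ∈ t, g c := Finset.sum_fiberwise_le_sum_of_sum_fiber_nonneg fun a _ =>
        Finset.sum_nonneg (hfiber a)

theorem sum_diam_append_append_le {r : NNReal} (hr : r ≤ 1) (hS : ∀ k, LipschitzWith r (S k))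
    (hI : ∀ k, MapsTo (S k) I I) (hU : IsSubinterval I U) (v : List κ) (p s : ℕ) :
    ∑ u ∈ wordsOfLength κ p, ∑ q ∈ wordsOfLength κ s,
        Metric.diam (compFam S (u ++ (v ++ q)) '' U) ≤
      lengthGrowth S I p * lengthGrowth S I s * (r ^ v.length * Metric.diam U) := by
  have hS' : ∀ k, LipschitzWith 1 (S k) := fun k => (hS k).weaken hr
  have hG := lengthGrowth_nonneg S I
  have hstep : ∀ q, totalLength S p (compFam S v '' (compFam S q '' U)) ≤
      lengthGrowth S I p * r ^ v.length * Metric.diam (compFam S q '' U) := by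
    intro q
    have hq := hU.image_compFam hS' hI q
    refine (totalLength_le_lengthGrowth_mul_diam hS' p (hq.image_compFam hS' hI v)).trans ?_
    rw [mul_assoc]
    exact mul_le_mul_of_nonneg_left (diam_compFam_image_le hS v hq.isBounded) (hG p)
  calc ∑ u ∈ wordsOfLength κ p, ∑ q ∈ wordsOfLength κ s,
        Metric.diam (compFam S (u ++ (v ++ q)) '' U)
      = ∑ q ∈ wordsOfLength κ s, totalLength S p (compFam S v '' (compFam S q '' U)) := by
        simp only [totalLength, compFam_append, image_comp]
        exact Finset.sum_comm
    _ ≤ lengthGrowth S I p * r ^ v.length * totalLength S s U := by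
        rw [totalLength, Finset.mul_sum]
        exact Finset.sum_le_sum fun q _ => hstep q
    _ ≤ lengthGrowth S I p * r ^ v.length * (lengthGrowth S I s * Metric.diam U) :=
        mul_le_mul_of_nonneg_left (totalLength_le_lengthGrowth_mul_diam hS' s hU)
          (mul_nonneg (hG p) (by positivity))
    _ = lengthGrowth S I p * lengthGrowth S I s * (r ^ v.length * Metric.diam U) := by ring

theorem visitWeightedLength_le_sum_factors (hS : ∀ k, LipschitzWith 1 (S k))
    (hgap : IsReturnGap S β η N) {z : ℝ} (hz : 1 ≤ z) (x : ℝ) (U : Set ℝ) :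
    visitWeightedLength S β η z x N U ≤
      ∑ p ∈ Finset.range (N + 1), ∑ t ∈ Finset.range (N + 1), ∑ v ∈ fixingWords S β t,
        ∑ u ∈ wordsOfLength κ p, ∑ q ∈ wordsOfLength κ (N - p - t),
          Metric.diam (compFam S (u ++ (v ++ q)) '' U) * z ^ (t + 1) := by
  classical
  let factors : Finset (Σ _ : ℕ × ℕ, List κ × List κ × List κ) :=
    (Finset.range (N + 1) ×ˢ Finset.range (N + 1)).sigma fun pt =>
      fixingWords S β pt.2 ×ˢ wordsOfLength κ pt.1 ×ˢ wordsOfLength κ (N - pt.1 - pt.2)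
  calc visitWeightedLength S β η z x N U
      ≤ ∑ c ∈ factors,
          Metric.diam (compFam S (c.2.2.1 ++ (c.2.1 ++ c.2.2.2)) '' U) * z ^ (c.1.2 + 1) := by
        refine sum_le_sum_of_exists_fiber (fun c => c.2.2.1 ++ (c.2.1 ++ c.2.2.2))
          (fun c _ => by positivity) fun w hw => ?_
        rw [mem_wordsOfLength] at hw
        obtain ⟨u, v, q, rfl, hv, hle⟩ := hgap.exists_fixing_factor hS x w hw.le
        simp only [List.length_append] at hw
        refine ⟨⟨(u.length, v.length), v, u, q⟩, ?_, rfl, by gcongr⟩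
        simp only [factors, Finset.mem_sigma, Finset.mem_product, Finset.mem_range,
          mem_wordsOfLength, mem_fixingWords, hv, and_true, true_and]
        omega
    _ = _ := by simp only [factors, Finset.sum_sigma, Finset.sum_product]

theorem sum_diam_append_fixingWord_append_le {r : NNReal} (hr0 : 0 < r) (hr : r ≤ 1)
    (hS : ∀ k, LipschitzWith r (S k)) (hI : ∀ k, MapsTo (S k) I I)
    {C E : ℝ} (hE : 0 ≤ E) (hgrowth : ∀ n : ℕ, lengthGrowth S I n ≤ C * Real.exp (E * n))
    (hU : IsSubinterval I U) {p t : ℕ} (hp : p ≤ N) {v : List κ} (hv : v ∈ fixingWords S β t) :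
    ∑ u ∈ wordsOfLength κ p, ∑ q ∈ wordsOfLength κ (N - p - t),
        Metric.diam (compFam S (u ++ (v ++ q)) '' U) * (r : ℝ)⁻¹ ^ (t + 1) ≤
      (r : ℝ)⁻¹ * C ^ 2 * Real.exp (E * N) * Metric.diam U := by
  have hps : (p : ℝ) + (N - p - t : ℕ) ≤ N := by
    exact_mod_cast (by omega : p + (N - p - t) ≤ N)
  have hnonneg := lengthGrowth_nonneg S I
  simp only [← Finset.sum_mul]
  calc _ ≤ C * Real.exp (E * p) * (C * Real.exp (E * (N - p - t : ℕ))) *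
        (r ^ t * Metric.diam U) * (r : ℝ)⁻¹ ^ (t + 1) := by
        refine mul_le_mul_of_nonneg_right ((sum_diam_append_append_le hr hS hI hU v p _).trans ?_)
          (by positivity)
        rw [(mem_fixingWords.1 hv).1]
        gcongr
        exacts [hnonneg _, (hnonneg p).trans (hgrowth p), hgrowth _, hgrowth _]
    _ = (r : ℝ)⁻¹ * C ^ 2 * Real.exp (E * (p + (N - p - t : ℕ))) * Metric.diam U := by
        rw [mul_add, Real.exp_add, pow_succ, inv_pow]
        field_simp
    _ ≤ _ := by gcongr

/-- The weight `r⁻¹ ^ (t + 1)` is compensated by the contraction `r ^ t` along the block of length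
`t` that fixes `β`; as this block is determined by its length, only its position and its length
have to be summed over. -/
theorem visitWeightedLength_le {r : NNReal} (hr0 : 0 < r) (hr : r ≤ 1)
    (hS : ∀ k, LipschitzWith r (S k)) (hI : ∀ k, MapsTo (S k) I I)
    (hgap : IsReturnGap S β η N) (huniq : ∀ n, (fixingWords S β n).card ≤ 1)
    {C E : ℝ} (hE : 0 ≤ E) (hgrowth : ∀ n : ℕ, lengthGrowth S I n ≤ C * Real.exp (E * n))
    (hU : IsSubinterval I U) (x : ℝ) :
    visitWeightedLength S β η r⁻¹ x N U ≤
      (N + 1) ^ 2 * ((r : ℝ)⁻¹ * C ^ 2) * Real.exp (E * N) * Metric.diam U := by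
  set B := (r : ℝ)⁻¹ * C ^ 2 * Real.exp (E * N) * Metric.diam U with hB
  have hB0 : 0 ≤ B := by positivity
  have hfactor : ∀ p ∈ Finset.range (N + 1), ∀ t ∈ Finset.range (N + 1),
      ∑ v ∈ fixingWords S β t, ∑ u ∈ wordsOfLength κ p, ∑ q ∈ wordsOfLength κ (N - p - t),
        Metric.diam (compFam S (u ++ (v ++ q)) '' U) * (r : ℝ)⁻¹ ^ (t + 1) ≤ B := by
    intro p hp t _
    refine (Finset.sum_le_card_nsmul _ _ B fun v hv =>
      sum_diam_append_fixingWord_append_le hr0 hr hS hI hE hgrowth hU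
        (Finset.mem_range_succ_iff.1 hp) hv).trans ?_
    simpa using nsmul_le_nsmul_left hB0 (huniq t)
  calc visitWeightedLength S β η r⁻¹ x N U
      ≤ ∑ _p ∈ Finset.range (N + 1), ∑ _t ∈ Finset.range (N + 1), B :=
        (visitWeightedLength_le_sum_factors (fun k => (hS k).weaken hr) hgap
          ((one_le_inv₀ hr0).2 hr) x U).trans
          (Finset.sum_le_sum fun p hp => Finset.sum_le_sum (hfactor p hp))
    _ = (N + 1) ^ 2 * ((r : ℝ)⁻¹ * C ^ 2) * Real.exp (E * N) * Metric.diam U := by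
        simp only [Finset.sum_const, Finset.card_range, nsmul_eq_mul, hB]
        push_cast
        ring

theorem visitWeightedLength_add (S : κ → ℝ → ℝ) (β η z x : ℝ) (p q : ℕ) (U : Set ℝ) :
    visitWeightedLength S β η z x (p + q) U = ∑ v ∈ wordsOfLength κ q,
      visitWeightedLength S β η z (compFam S v x) p (compFam S v '' U) *
        z ^ visits S β η x v := by
  simp only [visitWeightedLength, sum_wordsOfLength_add, Finset.sum_mul]
  rw [Finset.sum_comm]
  refine Finset.sum_congr rfl fun v _ => Finset.sum_congr rfl fun u _ => ?_
  rw [compFam_append, image_comp, visits_append, pow_add, mul_assoc,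
    mul_comm (z ^ visits S β η x v)]

theorem visitWeightedLength_mul_le {z A : ℝ} (hz : 0 ≤ z) (hA : 0 ≤ A)
    (hS : ∀ k, LipschitzWith 1 (S k)) (hI : ∀ k, MapsTo (S k) I I)
    (hblock : ∀ x U, IsSubinterval I U →
      visitWeightedLength S β η z x N U ≤ A * Metric.diam U)
    (M : ℕ) (hU : IsSubinterval I U) (x : ℝ) :
    visitWeightedLength S β η z x (M * N) U ≤ A ^ M * Metric.diam U := by
  induction M with
  | zero =>
    simp [visitWeightedLength, sum_wordsOfLength, visits]
  | succ M ih =>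
    rw [Nat.succ_mul, Nat.add_comm, visitWeightedLength_add]
    calc _ ≤ ∑ v ∈ wordsOfLength κ (M * N),
          A * (Metric.diam (compFam S v '' U) * z ^ visits S β η x v) := by
          refine Finset.sum_le_sum fun v _ => ?_
          rw [← mul_assoc]
          exact mul_le_mul_of_nonneg_right (hblock _ _ (hU.image_compFam hS hI v))
            (by positivity)
      _ = A * visitWeightedLength S β η z x (M * N) U := by
          rw [← Finset.mul_sum, visitWeightedLength]
      _ ≤ A ^ (M + 1) * Metric.diam U := by
          rw [pow_succ', mul_assoc]
          exact mul_le_mul_of_nonneg_left ih hA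

theorem eventually_sq_mul_le_exp {K θ : ℝ} (hK : 0 ≤ K) (hθ : 0 < θ) :
    ∀ᶠ n : ℕ in atTop, ((n : ℝ) + 1) ^ 2 * K ≤ Real.exp (θ * n) := by
  have hlim := tendsto_pow_const_div_const_pow_of_one_lt 2 (Real.one_lt_exp_iff.2 hθ)
  filter_upwards [hlim.eventually_lt_const (by positivity : 0 < 1 / (4 * K + 1)),
    eventually_ge_atTop 1] with n hn hn1
  have hn1' : (1 : ℝ) ≤ n := Nat.one_le_cast.2 hn1
  rw [div_lt_div_iff₀ (by positivity) (by positivity), one_mul, ← Real.exp_nat_mul,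
    mul_comm (n : ℝ)] at hn
  have : ((n : ℝ) + 1) ^ 2 * K ≤ 4 * (n : ℝ) ^ 2 * K :=
    mul_le_mul_of_nonneg_right (by nlinarith) hK
  linarith [sq_nonneg (n : ℝ)]

theorem exists_visitWeightedLength_le_exp {ι : Type*} [Finite ι] {β : ι → ℝ} {r : NNReal}
    (hr0 : 0 < r) (hr : r ≤ 1) (hS : ∀ k, LipschitzWith r (S k)) (hI : ∀ k, MapsTo (S k) I I)
    (huniq : ∀ j n, (fixingWords S (β j) n).card ≤ 1) {L θ : ℝ} (hL : 0 ≤ L) (hθ : 0 < θ)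
    (hgrowth : ∀ θ > 0, ∃ C ≥ 0, ∀ n : ℕ, lengthGrowth S I n ≤ C * Real.exp ((L + θ) * n)) :
    ∃ N : ℕ, 0 < N ∧ ∃ η > 0, ∀ j x M U, IsSubinterval I U →
      visitWeightedLength S (β j) η r⁻¹ x (M * N) U ≤
        Real.exp ((L + θ) * (M * N : ℕ)) * Metric.diam U := by
  obtain ⟨C, -, hC⟩ := hgrowth (θ / 2) (half_pos hθ)
  obtain ⟨N, hN, hN0⟩ := ((eventually_sq_mul_le_exp (K := (r : ℝ)⁻¹ * C ^ 2) (by positivity)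
    (half_pos hθ)).and (eventually_gt_atTop 0)).exists
  obtain ⟨η, hgap, hη⟩ := ((eventually_all.2 fun j => eventually_isReturnGap S (β j) N).and
    self_mem_nhdsWithin).exists
  refine ⟨N, hN0, η, hη, fun j x M U hU => ?_⟩
  have hblock : ∀ x U, IsSubinterval I U → visitWeightedLength S (β j) η r⁻¹ x N U ≤
      Real.exp ((L + θ) * N) * Metric.diam U := by
    intro x U hU
    calc visitWeightedLength S (β j) η r⁻¹ x N U
        ≤ (N + 1) ^ 2 * ((r : ℝ)⁻¹ * C ^ 2) * Real.exp ((L + θ / 2) * N) * Metric.diam U :=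
          visitWeightedLength_le hr0 hr hS hI (hgap j) (huniq j) (by positivity) hC hU x
      _ ≤ Real.exp (θ / 2 * N) * Real.exp ((L + θ / 2) * N) * Metric.diam U := by gcongr
      _ = Real.exp ((L + θ) * N) * Metric.diam U := by rw [← Real.exp_add]; ring_nf
  refine (visitWeightedLength_mul_le (by positivity) (Real.exp_pos _).le
    (fun k => (hS k).weaken hr) hI hblock M hU x).trans_eq ?_
  rw [← Real.exp_nat_mul]
  push_cast
  ring_nf

end WeightedLength

section PenalizedLength

variable {κ σ : Type*} [Fintype κ] [Fintype σ] {S : κ → ℝ → ℝ} {I U : Set ℝ} {β : σ → ℝ}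

/-- The total length of the images of `U` along words of length `n`, where every visit of the orbit
of `x` to the `η`-neighbourhood of one of the points `β j` is penalized by the factor `c`. -/
def penalizedLength (S : κ → ℝ → ℝ) (β : σ → ℝ) (η c x : ℝ) (n : ℕ) (U : Set ℝ) : ℝ :=
  ∑ w ∈ wordsOfLength κ n, c ^ (∑ j, visits S (β j) η x w) * Metric.diam (compFam S w '' U)

/-- If all `h j` are at most `k * n`, the first term is large; otherwise one of the others is. -/
theorem exp_neg_le_pow_sum_add_sum_pow {c r k lam θ : ℝ} (hc0 : 0 < c) (hc : c ≤ 1) (hr0 : 0 < r)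
    (hr : r ≤ 1) (hlam : Fintype.card σ * k * -Real.log c ≤ lam) (hθ : θ ≤ k * -Real.log r) (n : ℕ)
    (h : σ → ℕ) :
    Real.exp (-(lam * n)) ≤
      c ^ (∑ j, h j) + ∑ j, Real.exp (-((lam + θ) * n)) * r⁻¹ ^ h j := by
  have hlogc : 0 ≤ -Real.log c := neg_nonneg.2 (Real.log_nonpos hc0.le hc)
  have hlogr : 0 ≤ -Real.log r := neg_nonneg.2 (Real.log_nonpos hr0.le hr)
  by_cases hlarge : ∃ j, k * n < h j
  · obtain ⟨j, hj⟩ := hlarge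
    have hterm : Real.exp (-(lam * n)) ≤ Real.exp (-((lam + θ) * n)) * r⁻¹ ^ h j := by
      rw [← Real.exp_log (inv_pos.2 hr0), Real.log_inv, ← Real.exp_nat_mul, ← Real.exp_add,
        Real.exp_le_exp]
      have h1 := mul_le_mul_of_nonneg_right hj.le hlogr
      have h2 := mul_le_mul_of_nonneg_right hθ n.cast_nonneg
      linarith
    have hsum := Finset.single_le_sum
      (f := fun j => Real.exp (-((lam + θ) * n)) * r⁻¹ ^ h j)
      (fun j _ => by positivity) (Finset.mem_univ j)
    exact (hterm.trans hsum).trans (le_add_of_nonneg_left (by positivity))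
  · push Not at hlarge
    have hsum : ((∑ j, h j : ℕ) : ℝ) ≤ Fintype.card σ * (k * n) := by
      rw [Nat.cast_sum]
      simpa using Finset.sum_le_sum fun j (_ : j ∈ Finset.univ) => hlarge j
    refine le_add_of_le_of_nonneg ?_ (Finset.sum_nonneg fun j _ => by positivity)
    conv_rhs => rw [← Real.exp_log hc0, ← Real.exp_nat_mul]
    rw [Real.exp_le_exp]
    have h1 := mul_le_mul_of_nonneg_right hsum hlogc
    have h2 := mul_le_mul_of_nonneg_right hlam n.cast_nonneg
    linarith

theorem exp_neg_mul_totalLength_le {c r k lam θ : ℝ} (hc0 : 0 < c) (hc : c ≤ 1) (hr0 : 0 < r)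
    (hr : r ≤ 1) (hlam : Fintype.card σ * k * -Real.log c ≤ lam) (hθ : θ ≤ k * -Real.log r)
    (η x : ℝ) (n : ℕ) (U : Set ℝ) :
    Real.exp (-(lam * n)) * totalLength S n U ≤ penalizedLength S β η c x n U +
      ∑ j, Real.exp (-((lam + θ) * n)) * visitWeightedLength S (β j) η r⁻¹ x n U := by
  simp only [totalLength, penalizedLength, visitWeightedLength, Finset.mul_sum]
  rw [Finset.sum_comm, ← Finset.sum_add_distrib]
  refine Finset.sum_le_sum fun w _ => ?_
  refine (mul_le_mul_of_nonneg_right (exp_neg_le_pow_sum_add_sum_pow hc0 hc hr0 hr hlam hθ n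
    fun j => visits S (β j) η x w) Metric.diam_nonneg).trans_eq ?_
  rw [add_mul, Finset.sum_mul]
  exact congrArg _ (Finset.sum_congr rfl fun j _ => by ring)

theorem exp_mul_diam_le_penalizedLength {c r k L θ : ℝ} (hc0 : 0 < c) (hc : c ≤ 1) (hr0 : 0 < r)
    (hr : r ≤ 1) (hkL : Fintype.card σ * k * -Real.log c ≤ L / 2) (hθ : θ ≤ k * -Real.log r)
    {η x : ℝ} {n : ℕ} (hn : 4 * (Fintype.card σ : ℝ) ≤ Real.exp (θ / 2 * n))
    (hlength : Real.exp (L * n) / 2 * Metric.diam U ≤ totalLength S n U)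
    (hweighted : ∀ j, visitWeightedLength S (β j) η r⁻¹ x n U ≤
      Real.exp ((L + θ / 2) * n) * Metric.diam U) :
    Real.exp (L / 2 * n) / 4 * Metric.diam U ≤ penalizedLength S β η c x n U := by
  have hmain : Real.exp (L / 2 * n) / 2 * Metric.diam U ≤
      Real.exp (-(L / 2 * n)) * totalLength S n U := by
    calc Real.exp (L / 2 * n) / 2 * Metric.diam U
        = Real.exp (-(L / 2 * n)) * (Real.exp (L * n) / 2 * Metric.diam U) := by
          rw [← mul_assoc, ← mul_div_assoc, ← Real.exp_add]; ring_nf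
      _ ≤ _ := by gcongr
  have hbad : ∑ j, Real.exp (-((L / 2 + θ) * n)) * visitWeightedLength S (β j) η r⁻¹ x n U ≤
      Real.exp (L / 2 * n) / 4 * Metric.diam U := by
    calc _ ≤ ∑ _j : σ, Real.exp (-((L / 2 + θ) * n)) *
          (Real.exp ((L + θ / 2) * n) * Metric.diam U) :=
          Finset.sum_le_sum fun j _ => mul_le_mul_of_nonneg_left (hweighted j) (Real.exp_pos _).le
      _ = Fintype.card σ * (Real.exp (L / 2 * n) / Real.exp (θ / 2 * n) * Metric.diam U) := by
          rw [Finset.sum_const, Finset.card_univ, nsmul_eq_mul, ← mul_assoc (Real.exp _),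
            ← Real.exp_add, ← Real.exp_sub]
          ring_nf
      _ = Fintype.card σ / Real.exp (θ / 2 * n) * (Real.exp (L / 2 * n) * Metric.diam U) := by
          ring
      _ ≤ 1 / 4 * (Real.exp (L / 2 * n) * Metric.diam U) := by
          refine mul_le_mul_of_nonneg_right ?_ (by positivity)
          rw [div_le_div_iff₀ (Real.exp_pos _) (by norm_num)]
          linarith
      _ = _ := by ring
  linarith [exp_neg_mul_totalLength_le (S := S) (β := β) hc0 hc hr0 hr hkL hθ η x n U]

theorem frequently_exists_le_penalizedLength {r : NNReal} {c L : ℝ} (hr0 : 0 < r) (hr : r < 1)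
    (hc0 : 0 < c) (hc : c < 1) (hS : ∀ k, LipschitzWith r (S k)) (hI : ∀ k, MapsTo (S k) I I)
    (huniq : ∀ j n, (fixingWords S (β j) n).card ≤ 1) (hL : 0 < L)
    (hlower : ∀ n : ℕ, Real.exp (L * n) ≤ lengthGrowth S I n)
    (hgrowth : ∀ θ > 0, ∃ C ≥ 0, ∀ n : ℕ, lengthGrowth S I n ≤ C * Real.exp ((L + θ) * n)) :
    ∃ η > 0, ∀ u > 0, ∃ᶠ n : ℕ in atTop, ∃ U, IsSubinterval I U ∧ 0 < Metric.diam U ∧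
      Metric.diam U ≤ u ∧
      ∀ x, Real.exp (L / 2 * n) / 4 * Metric.diam U ≤ penalizedLength S β η c x n U := by
  have hlogc : 0 < -Real.log c := neg_pos.2 (Real.log_neg hc0 hc)
  have hlogr : 0 < -Real.log r := neg_pos.2 (Real.log_neg hr0 hr)
  set k := L / 2 / ((Fintype.card σ + 1) * -Real.log c)
  have hk : 0 < k := by positivity
  have hkL : Fintype.card σ * k * -Real.log c ≤ L / 2 := by
    have : k * ((Fintype.card σ + 1) * -Real.log c) = L / 2 := div_mul_cancel₀ _ (by positivity)
    nlinarith
  set θ := k * -Real.log r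
  have hθ : 0 < θ := mul_pos hk hlogr
  obtain ⟨N, hN, η, hη, hweighted⟩ := exists_visitWeightedLength_le_exp hr0 hr.le hS hI huniq
    hL.le (half_pos hθ) hgrowth
  refine ⟨η, hη, fun u hu => ?_⟩
  have hlarge : ∀ᶠ n : ℕ in atTop, 4 * (Fintype.card σ : ℝ) ≤ Real.exp (θ / 2 * n) :=
    (Real.tendsto_exp_atTop.comp
      (tendsto_natCast_atTop_atTop.const_mul_atTop (half_pos hθ))).eventually_ge_atTop _
  have hmul : Tendsto (fun M => M * N) atTop atTop := tendsto_id.atTop_mul_const' hN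
  refine hmul.frequently (Eventually.frequently ?_)
  filter_upwards [hmul.eventually hlarge] with M hM
  set n := M * N
  obtain ⟨U, hU, hU0, hUu, hlength⟩ := exists_short_subinterval_of_lt_lengthGrowth (n := n) hu
    (by positivity) ((half_lt_self (Real.exp_pos _)).trans_le (hlower n))
  exact ⟨U, hU, hU0, hUu, fun x => exp_mul_diam_le_penalizedLength hc0 hc.le hr0 hr.le hkL le_rfl hM
    hlength fun j => hweighted j x M U hU⟩

end PenalizedLength

/-! ### Piecewise linear functions -/

section PiecewiseLinear

variable {n : ℕ} {b b' : Fin n → ℝ} {ρ : Fin (n + 1) → ℝ} {τ : ℝ}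

theorem slopeIdx_congr {x y : ℝ} (h : ∀ j, b j < x ↔ b' j < y) : slopeIdx b x = slopeIdx b' y := by
  simp only [slopeIdx, h]

theorem slopeIdx_mono (b : Fin n → ℝ) : Monotone (slopeIdx b) := fun _ _ hxy =>
  Fin.mk_le_mk.2 <| Finset.card_le_card <|
    Finset.monotone_filter_right _ fun _ _ hj => lt_of_lt_of_le hj hxy

theorem lt_slopeIdx_iff (hb : StrictMono b) (x : ℝ) (j : Fin n) :
    (j : ℕ) < slopeIdx b x ↔ b j < x := by
  have hval : (slopeIdx b x : ℕ) = (Finset.univ.filter fun i => b i < x).card := rfl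
  rw [hval]
  refine ⟨fun hj => ?_, fun hj => ?_⟩
  · by_contra hx
    have hsub : (Finset.univ.filter fun i => b i < x) ⊆ Finset.Iio j := fun i hi =>
      Finset.mem_Iio.2 (hb.lt_iff_lt.1 ((Finset.mem_filter.1 hi).2.trans_le (not_lt.1 hx)))
    exact hj.not_ge ((Finset.card_le_card hsub).trans_eq (Fin.card_Iio j))
  · have hsub : Finset.Iic j ⊆ Finset.univ.filter fun i => b i < x := fun i hi =>
      Finset.mem_filter.2 ⟨Finset.mem_univ i, (hb.monotone (Finset.mem_Iic.1 hi)).trans_lt hj⟩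
    exact (Nat.lt_succ_self _).trans_le
      ((Fin.card_Iic j).symm.le.trans (Finset.card_le_card hsub))

theorem intervalIntegrable_slope (b : Fin n → ℝ) (ρ : Fin (n + 1) → ℝ) (x y : ℝ) :
    IntervalIntegrable (fun u => ρ (slopeIdx b u)) volume x y := by
  have hmeas : Measurable fun u => ρ (slopeIdx b u) :=
    (measurable_of_countable ρ).comp (slopeIdx_mono b).measurable
  refine (intervalIntegrable_const (c := ∑ i, ‖ρ i‖)).mono_fun hmeas.aestronglyMeasurable
    (Eventually.of_forall fun u => ?_)
  exact (Finset.single_le_sum (f := fun i => ‖ρ i‖) (fun _ _ => norm_nonneg _)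
    (Finset.mem_univ _)).trans (le_abs_self _)

theorem plFun_sub (b : Fin n → ℝ) (ρ : Fin (n + 1) → ℝ) (τ x y : ℝ) :
    plFun b ρ τ y - plFun b ρ τ x = ∫ u in x..y, ρ (slopeIdx b u) := by
  rw [plFun, plFun, add_sub_add_left_eq_sub]
  exact intervalIntegral.integral_interval_sub_left (intervalIntegrable_slope b ρ 0 y)
    (intervalIntegrable_slope b ρ 0 x)

theorem lipschitzWith_plFun {r : NNReal} (hρ : ∀ i, |ρ i| ≤ r) (b : Fin n → ℝ) (τ : ℝ) :
    LipschitzWith r (plFun b ρ τ) := by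
  refine LipschitzWith.of_dist_le_mul fun x y => ?_
  rw [Real.dist_eq, Real.dist_eq, plFun_sub]
  exact intervalIntegral.norm_integral_le_of_norm_le_const
    (f := fun u => ρ (slopeIdx b u)) fun u _ => hρ (slopeIdx b u)

theorem plFun_sub_of_slopeIdx_eq {i : Fin (n + 1)} {x y : ℝ}
    (h : ∀ u ∈ uIoc x y, slopeIdx b u = i) :
    plFun b ρ τ y - plFun b ρ τ x = ρ i * (y - x) := by
  have hconst : ∀ᵐ u, u ∈ uIoc x y → ρ (slopeIdx b u) = ρ i :=
    Eventually.of_forall fun u hu => by rw [h u hu]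
  rw [plFun_sub, intervalIntegral.integral_congr_ae hconst, intervalIntegral.integral_const,
    smul_eq_mul, mul_comm]

theorem abs_slope_sub_slope_le (hρ : ∀ i, |ρ i| ≤ 1) (b b' : Fin n → ℝ) (u : ℝ) :
    |ρ (slopeIdx b u) - ρ (slopeIdx b' u)| ≤
      ∑ j, (uIoc (b j) (b' j)).indicator (fun _ => (2 : ℝ)) u := by
  have hnonneg : ∀ j, 0 ≤ (uIoc (b j) (b' j)).indicator (fun _ => (2 : ℝ)) u := fun j =>
    indicator_nonneg (fun _ _ => zero_le_two) u
  by_cases h : ∃ j, u ∈ uIoc (b j) (b' j)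
  · obtain ⟨j, hj⟩ := h
    calc |ρ (slopeIdx b u) - ρ (slopeIdx b' u)| ≤ 1 + 1 :=
          (abs_sub _ _).trans (add_le_add (hρ _) (hρ _))
      _ = (uIoc (b j) (b' j)).indicator (fun _ => (2 : ℝ)) u := by
          rw [indicator_of_mem hj, one_add_one_eq_two]
      _ ≤ _ := Finset.single_le_sum (fun j _ => hnonneg j) (Finset.mem_univ j)
  · rw [slopeIdx_congr (b := b) (b' := b') (x := u) (y := u), sub_self, abs_zero]
    · exact Finset.sum_nonneg fun j _ => hnonneg j
    · intro j
      have hj := not_exists.1 h j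
      rw [mem_uIoc] at hj
      grind

theorem dist_plFun_le (hρ : ∀ i, |ρ i| ≤ 1) (b b' : Fin n → ℝ) (τ τ' x : ℝ) :
    dist (plFun b ρ τ x) (plFun b' ρ τ' x) ≤ dist τ τ' + 2 * ∑ j, dist (b j) (b' j) := by
  refine (dist_add_add_le _ _ _ _).trans (add_le_add_right ?_ _)
  rw [Real.dist_eq, ← intervalIntegral.integral_sub (intervalIntegrable_slope b ρ 0 x)
    (intervalIntegrable_slope b' ρ 0 x)]
  have hint : ∀ j, IntegrableOn ((uIoc (b j) (b' j)).indicator fun _ => (2 : ℝ)) (uIoc 0 x) :=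
    fun j => (integrableOn_const (by simp)).indicator measurableSet_uIoc
  calc |∫ u in (0 : ℝ)..x, (ρ (slopeIdx b u) - ρ (slopeIdx b' u))|
      ≤ ∫ u in uIoc 0 x, |ρ (slopeIdx b u) - ρ (slopeIdx b' u)| :=
        intervalIntegral.norm_integral_le_integral_norm_uIoc
          (f := fun u => ρ (slopeIdx b u) - ρ (slopeIdx b' u))
    _ ≤ ∫ u in uIoc 0 x, ∑ j, (uIoc (b j) (b' j)).indicator (fun _ => (2 : ℝ)) u :=
        integral_mono_of_nonneg (Eventually.of_forall fun u => abs_nonneg _)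
          (integrable_finsetSum _ fun j _ => hint j)
          (Eventually.of_forall (abs_slope_sub_slope_le hρ b b'))
    _ = ∑ j, ∫ u in uIoc 0 x, (uIoc (b j) (b' j)).indicator (fun _ => (2 : ℝ)) u :=
        integral_finsetSum _ fun j _ => hint j
    _ ≤ ∑ j, dist (b j) (b' j) * 2 := Finset.sum_le_sum fun j _ => by
        rw [setIntegral_indicator measurableSet_uIoc, setIntegral_const, smul_eq_mul]
        refine mul_le_mul_of_nonneg_right ?_ zero_le_two
        refine (measureReal_mono inter_subset_right (by simp)).trans_eq ?_
        rw [measureReal_def, Real.volume_uIoc, ENNReal.toReal_ofReal (abs_nonneg _), dist_comm,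
          Real.dist_eq]
    _ = 2 * ∑ j, dist (b j) (b' j) := by rw [← Finset.sum_mul, mul_comm]

theorem exists_gap_in_Icc (b : Fin n → ℝ) {p q : ℝ} (hpq : p ≤ q) :
    ∃ x ∈ Icc p q, ∃ y ∈ Icc p q, y - x = (q - p) / (n + 1) ∧ ∀ j, b j ∉ Ico x y := by
  set h := (q - p) / (n + 1)
  have hh0 : 0 ≤ h := div_nonneg (sub_nonneg.2 hpq) (by positivity)
  have hhn : (n + 1) * h = q - p := mul_div_cancel₀ _ (by positivity)
  obtain ⟨i, hi⟩ : ∃ i : Fin (n + 1), ∀ j, b j ∉ Ico (p + i * h) (p + (i + 1) * h) := by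
    by_contra! hcon
    choose g hg using hcon
    obtain ⟨i, i', hne, heq⟩ := Fintype.exists_ne_map_eq_of_card_lt g (by simp)
    wlog hlt : i < i' generalizing i i'
    · exact this i' i hne.symm heq.symm (hne.symm.lt_of_le (not_lt.1 hlt))
    have hle : ((i : ℕ) : ℝ) + 1 ≤ ((i' : ℕ) : ℝ) := by exact_mod_cast hlt
    have h1 := (hg i).2
    rw [heq] at h1
    linarith [(hg i').1, mul_le_mul_of_nonneg_right hle hh0]
  have hin : ((i : ℕ) : ℝ) + 1 ≤ n + 1 := by exact_mod_cast i.2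
  have hi0 : 0 ≤ ((i : ℕ) : ℝ) * h := by positivity
  have hiq := mul_le_mul_of_nonneg_right hin hh0
  refine ⟨p + i * h, ⟨?_, ?_⟩, p + (i + 1) * h, ⟨?_, ?_⟩, ?_, hi⟩ <;> linarith

theorem mul_sub_le_diam_plFun_image {c : ℝ} (hc : ∀ i, c * (n + 1) ≤ |ρ i|) (b : Fin n → ℝ)
    (τ : ℝ) {p q : ℝ} (hpq : p ≤ q) :
    c * (q - p) ≤ Metric.diam (plFun b ρ τ '' Icc p q) := by
  obtain ⟨x, hx, y, hy, hxy, hgap⟩ := exists_gap_in_Icc b hpq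
  have hyx : 0 ≤ y - x := by rw [hxy]; exact div_nonneg (sub_nonneg.2 hpq) (by positivity)
  have hslope : ∀ u ∈ uIoc x y, slopeIdx b u = slopeIdx b y := fun u hu => by
    rw [uIoc_of_le (sub_nonneg.1 hyx)] at hu
    exact slopeIdx_congr fun j => ⟨fun hj => hj.trans_le hu.2, fun hj =>
      lt_of_not_ge fun hju => hgap j ⟨hu.1.le.trans hju, hj⟩⟩
  have hcont : Continuous (plFun b ρ τ) := by
    refine (lipschitzWith_plFun (r := ∑ i, ‖ρ i‖₊) (fun i => ?_) b τ).continuous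
    exact_mod_cast Finset.single_le_sum (f := fun i => ‖ρ i‖₊) (fun _ _ => zero_le)
      (Finset.mem_univ i)
  calc c * (q - p) = c * (n + 1) * (y - x) := by rw [hxy]; field_simp
    _ ≤ |ρ (slopeIdx b y)| * (y - x) := mul_le_mul_of_nonneg_right (hc _) hyx
    _ = dist (plFun b ρ τ y) (plFun b ρ τ x) := by
        rw [Real.dist_eq, plFun_sub_of_slopeIdx_eq hslope, abs_mul, abs_of_nonneg hyx]
    _ ≤ _ := Metric.dist_le_diam_of_mem (isCompact_Icc.image hcont).isBounded
        (mem_image_of_mem _ hy) (mem_image_of_mem _ hx)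

theorem slopeIdx_eq_of_dist_lt {d e x y : ℝ} (hbb : ∀ j, dist (b j) (b' j) ≤ d)
    (hy : ∀ j, d + e < dist y (b j)) (hx : dist x y ≤ e) : slopeIdx b' x = slopeIdx b y := by
  refine slopeIdx_congr fun j => ?_
  have hb := abs_le.1 (hbb j)
  have hx := abs_le.1 hx
  rcases lt_abs.1 (hy j) with h | h
  · exact iff_of_true (by linarith) (by linarith)
  · exact iff_of_false (by linarith) (by linarith)

open scoped Pointwise in
theorem diam_image_affine (a t : ℝ) (U : Set ℝ) :
    Metric.diam ((fun x => a * x + t) '' U) = |a| * Metric.diam U := by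
  have himage : (fun x => a * x + t) '' U = IsometryEquiv.addRight t '' (a • U) := by
    rw [← image_smul, image_image]; rfl
  rw [himage, IsometryEquiv.diam_image, diam_smul₀, Real.norm_eq_abs]

theorem diam_plFun_image_of_dist_lt {d e y : ℝ} {U : Set ℝ} (hbb : ∀ j, dist (b j) (b' j) ≤ d)
    (hy : ∀ j, d + e < dist y (b j)) (hU : U ⊆ Metric.closedBall y e) :
    Metric.diam (plFun b' ρ τ '' U) = |ρ (slopeIdx b y)| * Metric.diam U := by
  rw [← diam_image_affine _ (plFun b' ρ τ y - ρ (slopeIdx b y) * y) U]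
  refine congrArg Metric.diam (image_congr fun p hp => ?_)
  have hpy : plFun b' ρ τ p - plFun b' ρ τ y = ρ (slopeIdx b y) * (p - y) := by
    refine plFun_sub_of_slopeIdx_eq fun u hu => slopeIdx_eq_of_dist_lt hbb hy ?_
    rw [dist_comm]
    exact (Real.dist_left_le_of_mem_uIcc (uIoc_subset_uIcc hu)).trans
      ((dist_comm _ _).le.trans (hU hp))
  linear_combination hpy

end PiecewiseLinear

/-! ### The supporting interval -/

section SupportingInterval

variable {m : ℕ} {f : Fin m → ℝ → ℝ} {r : NNReal}

/-- The nonempty compact intervals mapped into themselves by all the maps of `f`. -/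
def invariantIntervals (f : Fin m → ℝ → ℝ) : Set (Set ℝ) :=
  {J | J.Nonempty ∧ (∃ a b : ℝ, J = Icc a b) ∧ ∀ k, f k '' J ⊆ J}

theorem Icc_mem_invariantIntervals {a b : ℝ} (hab : a ≤ b)
    (h : ∀ k, MapsTo (f k) (Icc a b) (Icc a b)) : Icc a b ∈ invariantIntervals f :=
  ⟨nonempty_Icc.2 hab, ⟨a, b, rfl⟩, fun k => (h k).image_subset⟩

theorem suppInt_eq_sInter (h : ¬ ∃ φ, ∀ k, f k φ = φ) : suppInt f = ⋂₀ invariantIntervals f :=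
  dif_neg h

theorem suppInt_eq_Icc_of_exists_fixedPoint (h : ∃ φ, ∀ k, f k φ = φ) :
    ∃ φ, (∀ k, f k φ = φ) ∧ suppInt f = Icc (φ - 1 / 2) (φ + 1 / 2) :=
  ⟨h.choose, h.choose_spec, dif_pos h⟩

theorem mapsTo_Icc_of_dist_le {g : ℝ → ℝ} (hg : LipschitzWith r g) {x R : ℝ}
    (hx : dist (g x) x ≤ (1 - r) * R) : MapsTo g (Icc (x - R) (x + R)) (Icc (x - R) (x + R)) := by
  rw [← Real.closedBall_eq_Icc]
  intro y hy
  calc dist (g y) x ≤ dist (g y) (g x) + dist (g x) x := dist_triangle _ _ _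
    _ ≤ r * R + (1 - r) * R := add_le_add ((hg.dist_le_mul y x).trans (by gcongr; exact hy)) hx
    _ = R := by ring

theorem invariantIntervals_nonempty [Nonempty (Fin m)] (hf : ∀ k, ContractingWith r (f k)) :
    (invariantIntervals f).Nonempty := by
  set R := (∑ k, dist (f k 0) 0) / (1 - r)
  have hR : ∀ k, dist (f k 0) 0 ≤ (1 - r) * R := fun k => by
    rw [mul_div_cancel₀ _ (hf k).one_sub_K_pos.ne']
    exact Finset.single_le_sum (f := fun k => dist (f k 0) 0) (fun _ _ => dist_nonneg)
      (Finset.mem_univ k)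
  have hR0 : 0 ≤ R := div_nonneg (Finset.sum_nonneg fun _ _ => dist_nonneg)
    (hf (Classical.arbitrary _)).one_sub_K_pos.le
  exact ⟨_, Icc_mem_invariantIntervals (a := 0 - R) (b := 0 + R) (by linarith) fun k =>
    mapsTo_Icc_of_dist_le (hf k).toLipschitzWith (hR k)⟩

theorem fixedPoint_mem_sInter_invariantIntervals {k : Fin m} (hf : ContractingWith r (f k)) :
    hf.fixedPoint ∈ ⋂₀ invariantIntervals f := by
  rintro _ ⟨hne, ⟨a, b, rfl⟩, hJ⟩
  obtain ⟨p, hp, hfix⟩ := exists_mem_Icc_isFixedPt_of_mapsTo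
    hf.toLipschitzWith.continuous.continuousOn (nonempty_Icc.1 hne)
    (mapsTo_iff_image_subset.2 (hJ k))
  exact hf.fixedPoint_unique hfix ▸ hp

theorem exists_sInter_invariantIntervals_eq_Icc [Nonempty (Fin m)]
    (hf : ∀ k, ContractingWith r (f k)) :
    ∃ A B, A ≤ B ∧ ⋂₀ invariantIntervals f = Icc A B ∧ ∀ k, MapsTo (f k) (Icc A B) (Icc A B) := by
  set J := ⋂₀ invariantIntervals f
  obtain ⟨J₀, hJ₀⟩ := invariantIntervals_nonempty hf
  have hIcc : ∀ K ∈ invariantIntervals f, ∃ a b, K = Icc a b := fun K hK => hK.2.1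
  have hcompact : IsCompact J := by
    obtain ⟨a, b, rfl⟩ := hIcc _ hJ₀
    refine isCompact_Icc.of_isClosed_subset (isClosed_sInter fun K hK => ?_)
      (sInter_subset_of_mem hJ₀)
    obtain ⟨a, b, rfl⟩ := hIcc K hK
    exact isClosed_Icc
  have hord : J.OrdConnected := ordConnected_sInter fun K hK => by
    obtain ⟨a, b, rfl⟩ := hIcc K hK
    exact ordConnected_Icc
  have hne : J.Nonempty :=
    ⟨_, fixedPoint_mem_sInter_invariantIntervals (hf (Classical.arbitrary _))⟩
  have hmaps : ∀ k, MapsTo (f k) J J := fun k x hx K hK => hK.2.2 k ⟨x, hx K hK, rfl⟩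
  obtain ⟨A, B, hAB, hJAB⟩ :=
    (⟨hcompact, ⟨hne, hord.isPreconnected⟩, subset_rfl⟩ : IsSubinterval J J).exists_eq_Icc
  exact ⟨A, B, hAB, hJAB, hJAB ▸ hmaps⟩

theorem exists_suppInt_eq_Icc [Nonempty (Fin m)] (hf : ∀ k, ContractingWith r (f k)) :
    ∃ A B, A < B ∧ suppInt f = Icc A B ∧ ∀ k, MapsTo (f k) (Icc A B) (Icc A B) := by
  by_cases h : ∃ φ, ∀ k, f k φ = φ
  · obtain ⟨φ, hφ, hI⟩ := suppInt_eq_Icc_of_exists_fixedPoint h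
    refine ⟨_, _, by linarith, hI, fun k => mapsTo_Icc_of_dist_le (hf k).toLipschitzWith ?_⟩
    rw [hφ, dist_self]
    exact mul_nonneg (hf k).one_sub_K_pos.le (by norm_num)
  · obtain ⟨A, B, hAB, hJ, hmaps⟩ := exists_sInter_invariantIntervals_eq_Icc hf
    refine ⟨A, B, hAB.lt_of_ne ?_, (suppInt_eq_sInter h).trans hJ, hmaps⟩
    rintro rfl
    refine h ⟨A, fun k => ?_⟩
    simpa using hmaps k (left_mem_Icc.2 le_rfl)

/-- If `g` is close to the contracting system `f`, the `u`-neighbourhood of an invariant interval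
of `g` is invariant under `f`. -/
theorem suppInt_subset_of_dist_le {g : Fin m → ℝ → ℝ} (h : ¬ ∃ φ, ∀ k, f k φ = φ)
    (hf : ∀ k, LipschitzWith r (f k)) {A B u : ℝ} (hAB : A ≤ B) (hu : 0 ≤ u)
    (hg : ∀ k, MapsTo (g k) (Icc A B) (Icc A B))
    (hfg : ∀ k x, dist (f k x) (g k x) ≤ (1 - r) * u) : suppInt f ⊆ Icc (A - u) (B + u) := by
  rw [suppInt_eq_sInter h]
  refine sInter_subset_of_mem (Icc_mem_invariantIntervals (by linarith) fun k x hx => ?_)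
  obtain ⟨y, hy, hxy⟩ : ∃ y ∈ Icc A B, dist x y ≤ u := by
    refine ⟨projIcc A B hAB x, Subtype.coe_prop _, ?_⟩
    rw [coe_projIcc, Real.dist_eq, abs_le]
    grind
  have hfgy : dist (f k x) (g k y) ≤ u := by
    calc dist (f k x) (g k y) ≤ dist (f k x) (f k y) + dist (f k y) (g k y) := dist_triangle _ _ _
      _ ≤ r * u + (1 - r) * u :=
          add_le_add (((hf k).dist_le_mul x y).trans (by gcongr)) (hfg k y)
      _ = u := by ring
  have hgy := hg k hy
  have habs := abs_le.1 hfgy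
  constructor <;> linarith [hgy.1, hgy.2]

end SupportingInterval

/-! ### Exact overlaps -/

section ExactOverlap

theorem compFam_affine {ι : Type*} (r t : ι → ℝ) (w : List ι) (x : ℝ) :
    compFam (fun p x => r p * x + t p) w x =
      (w.map r).prod * x + compFam (fun p x => r p * x + t p) w 0 := by
  induction w with
  | nil => simp
  | cons k w ih =>
    simp only [compFam_cons, Function.comp_apply, List.map_cons, List.prod_cons, ih]
    ring

theorem ESCfam.noExactOverlap {ι : Type*} {r t : ι → ℝ} (h : ESCfam r t) :
    NoExactOverlap fun p x => r p * x + t p := by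
  obtain ⟨c, hc, nl, hnl, hsep⟩ := h
  intro n hn i j hij
  set S : ι → ℝ → ℝ := fun p x => r p * x + t p with hS
  by_contra hne
  specialize hsep n
  have hle : n ≤ nl n := hnl.le_apply
  generalize nl n = N at hsep hle
  obtain ⟨d, rfl⟩ := Nat.exists_eq_add_of_le hle
  set pad : Fin d → ι := fun _ => i ⟨0, hn⟩
  have hcomp : compFam S (List.ofFn (Fin.append i pad)) =
      compFam S (List.ofFn (Fin.append j pad)) := by
    simp only [List.ofFn_fin_append, compFam_append, hij]
  have hslope : ∀ i : Fin (n + d) → ι,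
      ∏ q, r (i q) = compFam S (List.ofFn i) 1 - compFam S (List.ofFn i) 0 := fun i => by
    rw [hS, compFam_affine r t _ 1, List.map_ofFn, List.prod_ofFn]
    simp
  rcases hsep (Fin.append i pad) (Fin.append j pad)
    (fun heq => hne (funext fun q => by simpa using congrFun heq (q.castAdd d))) with hprod | hdist
  · exact hprod (by rw [hslope, hslope, hcomp])
  · rw [hcomp, sub_self, abs_zero] at hdist
    exact hdist.not_gt (pow_pos hc _)

theorem NoExactOverlap.eq_of_compFam_eq {ι : Type*} {S : ι → ℝ → ℝ} (h : NoExactOverlap S)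
    {u v : List ι} (hlen : u.length = v.length) (heq : compFam S u = compFam S v) : u = v := by
  rcases u.length.eq_zero_or_pos with h0 | h0
  · rw [List.length_eq_zero_iff.1 h0, List.length_eq_zero_iff.1 (hlen.symm.trans h0)]
  · have hv : List.ofFn (fun q : Fin u.length => v.get (q.cast hlen)) = v := by
      rw [← List.ofFn_congr hlen.symm, List.ofFn_get]
    have hu : List.ofFn u.get = u := List.ofFn_get u
    have := h u.length h0 u.get (fun q => v.get (q.cast hlen)) (by rw [hu, hv, heq])
    rw [← hu, this, hv]

/-- The compositions along `u ++ v` and `v ++ u` have the same slope and the same fixed point. -/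
theorem NoExactOverlap.eq_of_compFam_fixes {ι : Type*} {r t : ι → ℝ}
    (h : NoExactOverlap fun p x => r p * x + t p) {u v : List ι} (hlen : u.length = v.length)
    {β : ℝ} (hu : compFam (fun p x => r p * x + t p) u β = β)
    (hv : compFam (fun p x => r p * x + t p) v β = β) : u = v := by
  have hslope : ((u ++ v).map r).prod = ((v ++ u).map r).prod := by
    simp only [List.map_append, List.prod_append, mul_comm]
  have hcomp : compFam (fun p x => r p * x + t p) (u ++ v) =
      compFam (fun p x => r p * x + t p) (v ++ u) := by
    have huv : compFam (fun p x => r p * x + t p) (u ++ v) β = β := by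
      rw [compFam_append, Function.comp_apply, hv, hu]
    have hvu : compFam (fun p x => r p * x + t p) (v ++ u) β = β := by
      rw [compFam_append, Function.comp_apply, hu, hv]
    rw [compFam_affine, hslope] at huv
    rw [compFam_affine] at hvu
    funext x
    rw [compFam_affine r t (u ++ v), compFam_affine r t (v ++ u), hslope]
    linarith
  exact List.append_inj_left (h.eq_of_compFam_eq (by simp [add_comm]) hcomp) hlen

/-- `t i` is the constant term of the affine map extending the restriction of `plFun b ρ τ` to the
`i`-th interval of linearity, so `x ↦ ρ i * x + t i` is the `i`-th generated affine map. -/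
def IsIntercept {n : ℕ} (b : Fin n → ℝ) (ρ : Fin (n + 1) → ℝ) (τ : ℝ) (t : Fin (n + 1) → ℝ) :
    Prop :=
  ∀ (i : Fin (n + 1)) (x : ℝ), (∀ j : Fin n, (j : ℕ) < (i : ℕ) → b j < x) →
    (∀ j : Fin n, (i : ℕ) ≤ (j : ℕ) → x < b j) → plFun b ρ τ x = ρ i * x + t i

theorem IsIntercept.plFun_eq {n : ℕ} {b : Fin n → ℝ} {ρ t : Fin (n + 1) → ℝ} {τ : ℝ}
    (ht : IsIntercept b ρ τ t) (hb : StrictMono b) (y : ℝ) :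
    plFun b ρ τ y = ρ (slopeIdx b y) * y + t (slopeIdx b y) := by
  obtain ⟨z, hz, hzy⟩ : ∃ z, (∀ j, b j < y → b j < z) ∧ z < y := by
    have hev : ∀ᶠ z in nhdsWithin y (Iio y), ∀ j, b j < y → b j < z :=
      eventually_all.2 fun j => eventually_imp_distrib_left.2 fun hj =>
        eventually_nhdsWithin_of_eventually_nhds (lt_mem_nhds hj)
    exact (hev.and self_mem_nhdsWithin).exists
  have hslope : ∀ x ∈ uIoc z y, slopeIdx b x = slopeIdx b y := fun x hx => by
    rw [uIoc_of_le hzy.le] at hx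
    exact slopeIdx_congr fun j => ⟨fun hj => hj.trans_le hx.2, fun hj => (hz j hj).trans hx.1⟩
  have hzval := ht (slopeIdx b y) z (fun j hj => hz j ((lt_slopeIdx_iff hb y j).1 hj))
    fun j hj => hzy.trans_le (not_lt.1 fun hjy => hj.not_gt ((lt_slopeIdx_iff hb y j).2 hjy))
  linear_combination plFun_sub_of_slopeIdx_eq (ρ := ρ) (τ := τ) hslope + hzval

variable {m : ℕ} {l : Fin m → ℕ} {b : BSpace m l} {τ : Fin m → ℝ} {ρ t : RSpace m l}

/-- The word over the generated affine maps that the piecewise linear system follows along the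
orbit of `x`. -/
def affineItinerary (b : BSpace m l) (f : Fin m → ℝ → ℝ) (x : ℝ) :
    List (Fin m) → List (Σ k : Fin m, Fin (l k + 1))
  | [] => []
  | k :: w => ⟨k, slopeIdx (b k) (compFam f w x)⟩ :: affineItinerary b f x w

theorem map_fst_affineItinerary (b : BSpace m l) (f : Fin m → ℝ → ℝ) (x : ℝ) (w : List (Fin m)) :
    (affineItinerary b f x w).map Sigma.fst = w := by
  induction w with
  | nil => rfl
  | cons k w ih => rw [affineItinerary, List.map_cons, ih]

theorem compFam_affineItinerary (hb : ∀ k, StrictMono (b k))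
    (ht : ∀ k, IsIntercept (b k) (ρ k) (τ k) (t k)) (x : ℝ) (w : List (Fin m)) :
    compFam (fun (q : Σ k, Fin (l k + 1)) x => ρ q.1 q.2 * x + t q.1 q.2)
      (affineItinerary b (paramFun m l (b, τ, ρ)) x w) x =
      compFam (paramFun m l (b, τ, ρ)) w x := by
  induction w with
  | nil => rfl
  | cons k w ih =>
    rw [affineItinerary, compFam_cons, Function.comp_apply, ih, compFam_cons, Function.comp_apply]
    exact ((ht k).plFun_eq (hb k) _).symm

theorem eq_of_compFam_paramFun_fixes (hb : ∀ k, StrictMono (b k))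
    (ht : ∀ k, IsIntercept (b k) (ρ k) (τ k) (t k))
    (hno : NoExactOverlap fun (q : Σ k, Fin (l k + 1)) x => ρ q.1 q.2 * x + t q.1 q.2)
    {u v : List (Fin m)} (hlen : u.length = v.length) {β : ℝ}
    (hu : compFam (paramFun m l (b, τ, ρ)) u β = β)
    (hv : compFam (paramFun m l (b, τ, ρ)) v β = β) : u = v := by
  set f := paramFun m l (b, τ, ρ)
  have hfst := map_fst_affineItinerary b f β
  have hlen' : ∀ w, (affineItinerary b f β w).length = w.length := fun w => by
    conv_rhs => rw [← hfst w, List.length_map]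
  rw [← hfst u, ← hfst v, hno.eq_of_compFam_fixes (by rw [hlen', hlen', hlen])
    ((compFam_affineItinerary hb ht β u).trans hu) ((compFam_affineItinerary hb ht β v).trans hv)]

theorem card_fixingWords_paramFun_le_one (hb : ∀ k, StrictMono (b k))
    (ht : ∀ k, IsIntercept (b k) (ρ k) (τ k) (t k))
    (hno : NoExactOverlap fun (q : Σ k, Fin (l k + 1)) x => ρ q.1 q.2 * x + t q.1 q.2)
    (β : ℝ) (n : ℕ) : (fixingWords (paramFun m l (b, τ, ρ)) β n).card ≤ 1 := by
  refine Finset.card_le_one.2 fun u hu v hv => ?_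
  rw [mem_fixingWords] at hu hv
  exact eq_of_compFam_paramFun_fixes hb ht hno (hu.1.trans hv.1.symm) hu.2 hv.2

theorem not_exists_common_fixedPoint (hm : 2 ≤ m) (hb : ∀ k, StrictMono (b k))
    (ht : ∀ k, IsIntercept (b k) (ρ k) (τ k) (t k))
    (hno : NoExactOverlap fun (q : Σ k, Fin (l k + 1)) x => ρ q.1 q.2 * x + t q.1 q.2) :
    ¬ ∃ φ, ∀ k, paramFun m l (b, τ, ρ) k φ = φ := by
  rintro ⟨φ, hφ⟩
  have heq : ([⟨0, by omega⟩] : List (Fin m)) = [⟨1, by omega⟩] :=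
    eq_of_compFam_paramFun_fixes hb ht hno rfl (hφ _) (hφ _)
  simp at heq

end ExactOverlap

/-! ### Pressure -/

section ExponentialRate

variable {a : ℕ → ℝ} {A C b : ℝ}

theorem abs_inv_mul_log_mul_pow_le (hA : 0 < A) (hC : 0 < C) (n : ℕ) :
    |(n : ℝ)⁻¹ * Real.log (A * C ^ n)| ≤ |Real.log A| + |Real.log C| := by
  rcases n.eq_zero_or_pos with rfl | hn
  · simpa using add_nonneg (abs_nonneg (Real.log A)) (abs_nonneg (Real.log C))
  · have hn' : (1 : ℝ) ≤ n := by exact_mod_cast hn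
    have heq : (n : ℝ)⁻¹ * Real.log (A * C ^ n) = (n : ℝ)⁻¹ * Real.log A + Real.log C := by
      rw [Real.log_mul hA.ne' (by positivity), Real.log_pow]
      field_simp
    rw [heq]
    refine (abs_add_le _ _).trans (add_le_add_left ?_ _)
    rw [abs_mul, abs_of_nonneg (by positivity)]
    exact mul_le_of_le_one_left (abs_nonneg _) (inv_le_one_of_one_le₀ hn')

theorem frequently_exp_mul_lt_of_lt_limsup (hA : 0 < A) (hC : 0 < C) (ha : ∀ n, A * C ^ n ≤ a n)
    (hb : b < limsup (fun n : ℕ => (n : ℝ)⁻¹ * Real.log (a n)) atTop) :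
    ∃ᶠ n : ℕ in atTop, Real.exp (b * n) < a n := by
  have hbdd : IsBoundedUnder (· ≥ ·) atTop fun n : ℕ => (n : ℝ)⁻¹ * Real.log (a n) :=
    isBoundedUnder_of ⟨-(|Real.log A| + |Real.log C|), fun n =>
      (neg_le_of_abs_le (abs_inv_mul_log_mul_pow_le hA hC n)).trans
        (mul_le_mul_of_nonneg_left (Real.log_le_log (by positivity) (ha n)) (by positivity))⟩
  refine ((frequently_lt_of_lt_limsup hbdd.isCoboundedUnder_le hb).and_eventually
    (eventually_gt_atTop 0)).mono ?_
  rintro n ⟨hn, hn0⟩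
  have hpos : 0 < a n := lt_of_lt_of_le (by positivity) (ha n)
  rwa [inv_mul_eq_div, lt_div_iff₀ (by exact_mod_cast hn0), Real.lt_log_iff_exp_lt hpos] at hn

theorem le_limsup_of_frequently_exp_mul_le (hA : 0 < A) (hC : 0 < C) (ha0 : ∀ n, 0 ≤ a n)
    (ha : ∀ n, a n ≤ A * C ^ n) (hb : ∃ᶠ n : ℕ in atTop, Real.exp (b * n) ≤ a n) :
    b ≤ limsup (fun n : ℕ => (n : ℝ)⁻¹ * Real.log (a n)) atTop := by
  have hbdd : IsBoundedUnder (· ≤ ·) atTop fun n : ℕ => (n : ℝ)⁻¹ * Real.log (a n) := by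
    refine isBoundedUnder_of ⟨|Real.log A| + |Real.log C|, fun n => ?_⟩
    rcases (ha0 n).eq_or_lt with h0 | h0
    · rw [← h0, Real.log_zero, mul_zero]
      positivity
    · exact (mul_le_mul_of_nonneg_left (Real.log_le_log h0 (ha n)) (by positivity)).trans
        (le_of_abs_le (abs_inv_mul_log_mul_pow_le hA hC n))
  refine le_limsup_of_frequently_le ((hb.and_eventually (eventually_gt_atTop 0)).mono ?_) hbdd
  rintro n ⟨hn, hn0⟩
  rwa [inv_mul_eq_div, le_div_iff₀ (by exact_mod_cast hn0),
    Real.le_log_iff_exp_le ((Real.exp_pos _).trans_le hn)]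

end ExponentialRate

section Pressure

variable {m : ℕ} {f : Fin m → ℝ → ℝ} {s : ℝ}

/-- The sum `∑ |I_w| ^ s` over the cylinder intervals of level `n`, whose exponential growth rate
is the pressure at `s`. -/
def cylinderSum (f : Fin m → ℝ → ℝ) (s : ℝ) (n : ℕ) : ℝ :=
  ∑ w ∈ wordsOfLength (Fin m) n, Metric.diam (compFam f w '' suppInt f) ^ s

theorem pressure_eq_limsup_log_cylinderSum (f : Fin m → ℝ → ℝ) (s : ℝ) :
    pressure f s = limsup (fun n : ℕ => (n : ℝ)⁻¹ * Real.log (cylinderSum f s n)) atTop := by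
  simp only [pressure, cylinderSum, sum_wordsOfLength]

theorem cylinderSum_nonneg (f : Fin m → ℝ → ℝ) (s : ℝ) (n : ℕ) : 0 ≤ cylinderSum f s n :=
  Finset.sum_nonneg fun _ _ => Real.rpow_nonneg Metric.diam_nonneg s

theorem pow_mul_sub_le_diam_compFam_image {ι : Type*} {S : ι → ℝ → ℝ} {c p q : ℝ} (hc : 0 ≤ c)
    (hS : ∀ k, LipschitzWith 1 (S k))
    (hlow : ∀ k p q, p ≤ q → c * (q - p) ≤ Metric.diam (S k '' Icc p q)) (hpq : p ≤ q)
    (w : List ι) : c ^ w.length * (q - p) ≤ Metric.diam (compFam S w '' Icc p q) := by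
  induction w with
  | nil => simp [Real.diam_Icc hpq]
  | cons k w ih =>
    rw [List.length_cons, pow_succ', mul_assoc]
    exact (mul_le_mul_of_nonneg_left ih hc).trans
      (mul_diam_compFam_image_le hS hlow (isSubinterval_Icc hpq (subset_univ _)) k w)

theorem mul_pow_le_cylinderSum [Nonempty (Fin m)] {A B c : ℝ} (hf : ∀ k, LipschitzWith 1 (f k))
    (hc : 0 ≤ c) (hlow : ∀ k p q, p ≤ q → c * (q - p) ≤ Metric.diam (f k '' Icc p q))
    (hAB : A ≤ B) (hsupp : suppInt f = Icc A B) (hs : 0 ≤ s) (n : ℕ) :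
    (B - A) ^ s * (c ^ s) ^ n ≤ cylinderSum f s n := by
  obtain ⟨k⟩ := ‹Nonempty (Fin m)›
  have hAB' : 0 ≤ B - A := sub_nonneg.2 hAB
  have hle := pow_mul_sub_le_diam_compFam_image hc hf hlow hAB (List.replicate n k)
  calc (B - A) ^ s * (c ^ s) ^ n = (c ^ (List.replicate n k).length * (B - A)) ^ s := by
        rw [List.length_replicate, Real.mul_rpow (by positivity) hAB', ← Real.rpow_pow_comm hc,
          mul_comm]
    _ ≤ Metric.diam (compFam f (List.replicate n k) '' suppInt f) ^ s := by
        rw [hsupp]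
        exact Real.rpow_le_rpow (by positivity) hle hs
    _ ≤ cylinderSum f s n :=
        Finset.single_le_sum (f := fun w => Metric.diam (compFam f w '' suppInt f) ^ s)
          (fun _ _ => Real.rpow_nonneg Metric.diam_nonneg s)
          (mem_wordsOfLength.2 List.length_replicate)

theorem cylinderSum_le_mul_totalLength {r : NNReal} (hf : ∀ k, LipschitzWith r (f k))
    (hI : Bornology.IsBounded (suppInt f)) (hs : 1 ≤ s) (n : ℕ) :
    cylinderSum f s n ≤
      (r ^ n * Metric.diam (suppInt f)) ^ (s - 1) * totalLength f n (suppInt f) := by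
  rw [totalLength, Finset.mul_sum]
  refine Finset.sum_le_sum fun w hw => ?_
  have hdiam := diam_compFam_image_le hf w hI
  rw [mem_wordsOfLength.1 hw] at hdiam
  set d := Metric.diam (compFam f w '' suppInt f)
  have hd : 0 ≤ d := Metric.diam_nonneg
  calc d ^ s = d ^ (s - 1) * d := by
        conv_lhs => rw [← sub_add_cancel s 1, Real.rpow_add_one' hd (by linarith)]
    _ ≤ (r ^ n * Metric.diam (suppInt f)) ^ (s - 1) * d := by gcongr

theorem exists_frequently_exp_mul_le_lengthGrowth [Nonempty (Fin m)] {r : NNReal} {A B c : ℝ}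
    (hr0 : 0 < r) (hr : r < 1) (hf : ∀ k, LipschitzWith r (f k)) (hc : 0 < c)
    (hlow : ∀ k p q, p ≤ q → c * (q - p) ≤ Metric.diam (f k '' Icc p q))
    (hAB : A < B) (hsupp : suppInt f = Icc A B) (hs : 1 < s) (hp : 0 ≤ pressure f s) :
    ∃ ε > 0, ∃ K > 0, ∃ᶠ n : ℕ in atTop,
      K * Real.exp (ε * n) ≤ lengthGrowth f (suppInt f) n := by
  have hf1 : ∀ k, LipschitzWith 1 (f k) := fun k => (hf k).weaken hr.le
  have hD : 0 < B - A := sub_pos.2 hAB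
  have hsub : IsSubinterval (suppInt f) (suppInt f) := hsupp ▸ isSubinterval_Icc hAB.le le_rfl
  set ε := (s - 1) * -Real.log r / 2 with hε_def
  have hε : 0 < ε := half_pos (mul_pos (sub_pos.2 hs) (neg_pos.2 (Real.log_neg hr0 hr)))
  rw [pressure_eq_limsup_log_cylinderSum] at hp
  have hfreq := frequently_exp_mul_lt_of_lt_limsup (by positivity) (Real.rpow_pos_of_pos hc s)
    (mul_pow_le_cylinderSum hf1 hc.le hlow hAB.le hsupp (by linarith))
    ((neg_neg_of_pos hε).trans_le hp)
  refine ⟨ε, hε, ((B - A) ^ s)⁻¹, by positivity, hfreq.mono fun n hn => ?_⟩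
  have hrn : ((r : ℝ) ^ n * (B - A)) ^ (s - 1) =
      Real.exp (-ε * n) * Real.exp (-ε * n) * (B - A) ^ (s - 1) := by
    rw [Real.mul_rpow (by positivity) hD.le, Real.rpow_def_of_pos (by positivity), Real.log_pow,
      ← Real.exp_add, hε_def]
    ring_nf
  have hle : Real.exp (-ε * n) ≤ Real.exp (-ε * n) *
      (Real.exp (-ε * n) * ((B - A) ^ s * lengthGrowth f (suppInt f) n)) := by
    calc Real.exp (-ε * n)
        ≤ (r ^ n * (B - A)) ^ (s - 1) * totalLength f n (suppInt f) := by
          simpa [hsupp, Real.diam_Icc hAB.le] using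
            hn.le.trans (cylinderSum_le_mul_totalLength hf hsub.isBounded hs.le n)
      _ ≤ (r ^ n * (B - A)) ^ (s - 1) * (lengthGrowth f (suppInt f) n * (B - A)) := by
          gcongr
          simpa [hsupp, Real.diam_Icc hAB.le] using
            totalLength_le_lengthGrowth_mul_diam hf1 n hsub
      _ = _ := by
          rw [hrn, ← sub_add_cancel s 1, Real.rpow_add_one hD.ne', add_sub_cancel_right]
          ring
  rw [inv_mul_le_iff₀ (by positivity)]
  rw [le_mul_iff_one_le_right (Real.exp_pos _), neg_mul, Real.exp_neg] at hle
  exact (one_le_inv_mul₀ (Real.exp_pos _)).1 hle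

theorem cylinderSum_le_mul_card_pow {D : ℝ} (hf : ∀ k, LipschitzWith 1 (f k))
    (hI : Bornology.IsBounded (suppInt f)) (hD : 1 ≤ D) (hDI : Metric.diam (suppInt f) ≤ D)
    (hs0 : 0 ≤ s) (hs1 : s ≤ 1) (n : ℕ) : cylinderSum f s n ≤ D * (m : ℝ) ^ n := by
  have hterm : ∀ w, Metric.diam (compFam f w '' suppInt f) ^ s ≤ D := fun w => by
    have hdiam : Metric.diam (compFam f w '' suppInt f) ≤ D :=
      (diam_compFam_image_le hf w hI).trans (by simpa using hDI)
    calc _ ≤ D ^ s := Real.rpow_le_rpow Metric.diam_nonneg hdiam hs0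
      _ ≤ D := Real.rpow_le_self_of_one_le hD hs1
  simpa [cylinderSum, mul_comm] using
    Finset.sum_le_card_nsmul (wordsOfLength (Fin m) n) _ D fun w _ => hterm w

theorem totalLength_le_mul_cylinderSum {D : ℝ} (hf : ∀ k, LipschitzWith 1 (f k))
    (hI : Bornology.IsBounded (suppInt f)) (hD : 1 ≤ D) (hDI : Metric.diam (suppInt f) ≤ D)
    (hs0 : 0 ≤ s) (hs1 : s ≤ 1) (n : ℕ) :
    totalLength f n (suppInt f) ≤ D * cylinderSum f s n := by
  rw [totalLength, cylinderSum, Finset.mul_sum]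
  refine Finset.sum_le_sum fun w _ => ?_
  have hdiam : Metric.diam (compFam f w '' suppInt f) ≤ D :=
    (diam_compFam_image_le hf w hI).trans (by simpa using hDI)
  set d := Metric.diam (compFam f w '' suppInt f)
  have hd : 0 ≤ d := Metric.diam_nonneg
  calc d = d ^ (1 - s) * d ^ s := by rw [← Real.rpow_add' hd (by simp)]; simp
    _ ≤ D ^ (1 - s) * d ^ s := by gcongr
    _ ≤ D * d ^ s := by gcongr; exact Real.rpow_le_self_of_one_le hD (by linarith)

theorem pressure_pos_of_frequently_le_totalLength {K ε : ℝ} (hf : ∀ k, LipschitzWith 1 (f k))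
    (hI : Bornology.IsBounded (suppInt f)) (hs0 : 0 ≤ s) (hs1 : s ≤ 1) (hK : 0 < K) (hε : 0 < ε)
    (hfreq : ∃ᶠ n : ℕ in atTop, K * Real.exp (ε * n) ≤ totalLength f n (suppInt f)) :
    0 < pressure f s := by
  set D := max 1 (Metric.diam (suppInt f))
  have hD : 1 ≤ D := le_max_left _ _
  have hD0 : 0 < D := one_pos.trans_le hD
  have hDI : Metric.diam (suppInt f) ≤ D := le_max_right _ _
  have hlarge : ∀ᶠ n : ℕ in atTop, D / K ≤ Real.exp (ε / 2 * n) :=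
    (Real.tendsto_exp_atTop.comp
      (tendsto_natCast_atTop_atTop.const_mul_atTop (half_pos hε))).eventually_ge_atTop _
  have hfreq' : ∃ᶠ n : ℕ in atTop, Real.exp (ε / 2 * n) ≤ cylinderSum f s n := by
    refine (hfreq.and_eventually hlarge).mono ?_
    rintro n ⟨hn, hDK⟩
    refine le_of_mul_le_mul_left ?_ hD0
    calc D * Real.exp (ε / 2 * n) ≤ K * Real.exp (ε / 2 * n) * Real.exp (ε / 2 * n) := by
          gcongr
          rwa [mul_comm, ← div_le_iff₀ hK]
      _ = K * Real.exp (ε * n) := by rw [mul_assoc, ← Real.exp_add]; ring_nf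
      _ ≤ D * cylinderSum f s n :=
          hn.trans (totalLength_le_mul_cylinderSum hf hI hD hDI hs0 hs1 n)
  rw [pressure_eq_limsup_log_cylinderSum]
  refine (half_pos hε).trans_le (le_limsup_of_frequently_exp_mul_le hD0 (C := m + 1) (by positivity)
    (cylinderSum_nonneg f s) (fun n => ?_) hfreq')
  refine (cylinderSum_le_mul_card_pow hf hI hD hDI hs0 hs1 n).trans ?_
  gcongr
  linarith

end Pressure

/-! ### Comparison with a nearby system -/

section Comparison

variable {κ σ : Type*} [Fintype σ] {S S' : κ → ℝ → ℝ} {β : σ → ℝ} {c x η D : ℝ} {U V : Set ℝ}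

/-- Around any point that is at distance more than `η` from all the `β j`, the maps `S k` and
`S' k` multiply the diameters of the sets of radius `D` by the same factor. -/
def HasCommonScaling (S S' : κ → ℝ → ℝ) (β : σ → ℝ) (η D : ℝ) : Prop :=
  ∀ k y, (∀ j, η < dist y (β j)) → ∃ a, 0 ≤ a ∧ ∀ U ⊆ Metric.closedBall y D,
    Metric.diam (S k '' U) = a * Metric.diam U ∧ Metric.diam (S' k '' U) = a * Metric.diam U

theorem compFam_image_subset_closedBall {r : NNReal} (hS : ∀ k, LipschitzWith r (S k))
    (hSS' : ∀ k x, dist (S k x) (S' k x) ≤ (1 - r) * D) (hV : V ⊆ Metric.closedBall x D)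
    (w : List κ) : compFam S' w '' V ⊆ Metric.closedBall (compFam S w x) D := by
  rintro _ ⟨y, hy, rfl⟩
  rw [Metric.mem_closedBall']
  exact dist_compFam_le hS hSS' w (Metric.mem_closedBall'.1 (hV hy))

theorem sum_visits_add_one_le {w : List κ} (h : ∃ j, dist (compFam S w x) (β j) ≤ η) (k : κ) :
    (∑ j, visits S (β j) η x w) + 1 ≤ ∑ j, visits S (β j) η x (k :: w) := by
  obtain ⟨j, hj⟩ := h
  refine Nat.succ_le_of_lt (Finset.sum_lt_sum (fun i _ => ?_) ⟨j, Finset.mem_univ j, ?_⟩)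
  · exact Nat.le_add_right _ _
  · simp [visits, hj]

theorem sum_visits_cons_of_forall_lt {w : List κ} (h : ∀ j, η < dist (compFam S w x) (β j))
    (k : κ) : ∑ j, visits S (β j) η x (k :: w) = ∑ j, visits S (β j) η x w := by
  simp [visits, (h _).not_ge]

theorem pow_sum_visits_mul_diam_cons_le (hS : ∀ k, LipschitzWith 1 (S k)) (hc0 : 0 ≤ c)
    (hc1 : c ≤ 1) (hU : Bornology.IsBounded U) {w : List κ}
    (h : ∃ j, dist (compFam S w x) (β j) ≤ η) (k : κ) :
    c ^ (∑ j, visits S (β j) η x (k :: w)) * Metric.diam (compFam S (k :: w) '' U) ≤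
      c * (c ^ (∑ j, visits S (β j) η x w) * Metric.diam (compFam S w '' U)) := by
  have hdiam : Metric.diam (compFam S (k :: w) '' U) ≤ Metric.diam (compFam S w '' U) := by
    rw [compFam_cons, image_comp]
    simpa using (hS k).diam_image_le _ ((lipschitzWith_one_compFam hS w).isBounded_image hU)
  rw [← mul_assoc, ← pow_succ']
  exact mul_le_mul (pow_le_pow_of_le_one hc0 hc1 (sum_visits_add_one_le h k)) hdiam
    Metric.diam_nonneg (by positivity)

/-- A visit to the `η`-neighbourhood of some `β j` costs at most a factor `c`; at all other times
the two systems expand equally. -/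
theorem diam_mul_pow_sum_visits_mul_diam_le {r : NNReal} (hr : r ≤ 1) (hc0 : 0 ≤ c) (hc1 : c ≤ 1)
    (hS : ∀ k, LipschitzWith r (S k)) (hS' : ∀ k, LipschitzWith 1 (S' k))
    (hSS' : ∀ k x, dist (S k x) (S' k x) ≤ (1 - r) * D)
    (hlow : ∀ k p q, p ≤ q → c * (q - p) ≤ Metric.diam (S' k '' Icc p q))
    (hscale : HasCommonScaling S S' β η D) (hU : U ⊆ Metric.closedBall x D)
    (hV : IsSubinterval (Metric.closedBall x D) V) (w : List κ) :
    Metric.diam V * (c ^ (∑ j, visits S (β j) η x w) * Metric.diam (compFam S w '' U)) ≤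
      Metric.diam U * Metric.diam (compFam S' w '' V) := by
  induction w with
  | nil => simp [visits, mul_comm]
  | cons k w ih =>
    by_cases hvisit : ∃ j, dist (compFam S w x) (β j) ≤ η
    · have hS1 : ∀ k, LipschitzWith 1 (S k) := fun k => (hS k).weaken hr
      have hbdd : Bornology.IsBounded U := Metric.isBounded_closedBall.subset hU
      calc Metric.diam V *
            (c ^ (∑ j, visits S (β j) η x (k :: w)) * Metric.diam (compFam S (k :: w) '' U))
          ≤ Metric.diam V *
            (c * (c ^ (∑ j, visits S (β j) η x w) * Metric.diam (compFam S w '' U))) := by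
            gcongr ?_ * ?_
            exact pow_sum_visits_mul_diam_cons_le hS1 hc0 hc1 hbdd hvisit k
        _ ≤ c * (Metric.diam U * Metric.diam (compFam S' w '' V)) := by
            rw [mul_left_comm]
            gcongr
        _ ≤ Metric.diam U * Metric.diam (compFam S' (k :: w) '' V) := by
            rw [mul_left_comm]
            gcongr
            exact mul_diam_compFam_image_le hS' hlow hV k w
    · push Not at hvisit
      obtain ⟨a, ha, hscale⟩ := hscale k _ hvisit
      have hself : ∀ k x, dist (S k x) (S k x) ≤ (1 - r) * D := fun k x =>
        (dist_self (S k x)).trans_le (dist_nonneg.trans (hSS' k x))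
      have hA := hscale _ (compFam_image_subset_closedBall hS hself hU w)
      have hB := hscale _ (compFam_image_subset_closedBall hS hSS' hV.subset w)
      rw [sum_visits_cons_of_forall_lt hvisit, compFam_cons, compFam_cons, image_comp, image_comp,
        hA.1, hB.2]
      linear_combination a * ih

theorem diam_mul_penalizedLength_le [Fintype κ] {r : NNReal} (hr : r ≤ 1) (hc0 : 0 ≤ c)
    (hc1 : c ≤ 1) (hS : ∀ k, LipschitzWith r (S k)) (hS' : ∀ k, LipschitzWith 1 (S' k))
    (hSS' : ∀ k x, dist (S k x) (S' k x) ≤ (1 - r) * D)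
    (hlow : ∀ k p q, p ≤ q → c * (q - p) ≤ Metric.diam (S' k '' Icc p q))
    (hscale : HasCommonScaling S S' β η D) (hU : U ⊆ Metric.closedBall x D)
    (hV : IsSubinterval (Metric.closedBall x D) V) (n : ℕ) :
    Metric.diam V * penalizedLength S β η c x n U ≤ Metric.diam U * totalLength S' n V := by
  rw [penalizedLength, totalLength, Finset.mul_sum, Finset.mul_sum]
  exact Finset.sum_le_sum fun w _ =>
    diam_mul_pow_sum_visits_mul_diam_le hr hc0 hc1 hS hS' hSS' hlow hscale hU hV w

theorem exists_Icc_subset_Icc_inter_closedBall {A B A' B' u : ℝ} (hu : 0 ≤ u)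
    (huAB : 4 * u ≤ B - A) (hsub : Icc A B ⊆ Icc (A' - u) (B' + u)) (hx : x ∈ Icc A B) :
    ∃ y, Icc y (y + u) ⊆ Icc A' B' ∩ Metric.closedBall x (3 * u) := by
  obtain ⟨hA, hB⟩ := (Icc_subset_Icc_iff (hx.1.trans hx.2)).1 hsub
  obtain ⟨y, hAy, hyB, hxy, hyx⟩ : ∃ y, A + u ≤ y ∧ y + 2 * u ≤ B ∧ x ≤ y + 3 * u ∧ y ≤ x + u := by
    rcases le_total x (B - 2 * u) with h | h
    · exact ⟨max x (A + u), by grind⟩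
    · exact ⟨B - 2 * u, by grind⟩
  refine ⟨y, fun z hz => ⟨⟨?_, ?_⟩, ?_⟩⟩
  · linarith [hz.1]
  · linarith [hz.2]
  · rw [Real.closedBall_eq_Icc]
    exact ⟨by linarith [hz.1], by linarith [hz.2]⟩

theorem totalLength_mono [Fintype κ] (hS : ∀ k, LipschitzWith 1 (S k)) (n : ℕ) (hUV : U ⊆ V)
    (hV : Bornology.IsBounded V) : totalLength S n U ≤ totalLength S n V :=
  Finset.sum_le_sum fun w _ => Metric.diam_mono (image_mono hUV)
    ((lipschitzWith_one_compFam hS w).isBounded_image hV)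

theorem mul_le_totalLength_of_le_penalizedLength [Fintype κ] {r : NNReal} {A B A' B' u E : ℝ}
    (hr : r ≤ 1) (hc0 : 0 ≤ c) (hc1 : c ≤ 1) (hS : ∀ k, LipschitzWith r (S k))
    (hS' : ∀ k, LipschitzWith 1 (S' k))
    (hSS' : ∀ k x, dist (S k x) (S' k x) ≤ (1 - r) * u)
    (hlow : ∀ k p q, p ≤ q → c * (q - p) ≤ Metric.diam (S' k '' Icc p q))
    (hscale : HasCommonScaling S S' β η (3 * u)) (hu : 0 ≤ u) (huAB : 4 * u ≤ B - A)
    (hsub : Icc A B ⊆ Icc (A' - u) (B' + u)) {n : ℕ} (hU : IsSubinterval (Icc A B) U)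
    (hU0 : 0 < Metric.diam U) (hUu : Metric.diam U ≤ u)
    (hE : ∀ x, E * Metric.diam U ≤ penalizedLength S β η c x n U) :
    u * E ≤ totalLength S' n (Icc A' B') := by
  obtain ⟨x, hx⟩ := hU.isConnected.nonempty
  obtain ⟨y, hy⟩ := exists_Icc_subset_Icc_inter_closedBall hu huAB hsub (hU.subset hx)
  have hUx : U ⊆ Metric.closedBall x (3 * u) := fun z hz =>
    Metric.mem_closedBall.2 ((Metric.dist_le_diam_of_mem hU.isBounded hz hx).trans (by linarith))
  have hSS'3 : ∀ k x, dist (S k x) (S' k x) ≤ (1 - r) * (3 * u) := fun k x => by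
    have := dist_nonneg.trans (hSS' k x)
    linarith [hSS' k x]
  have hdiam : Metric.diam (Icc y (y + u)) = u := by simp [Real.diam_Icc, hu]
  have hcomp := diam_mul_penalizedLength_le hr hc0 hc1 hS hS' hSS'3 hlow hscale hUx
    (isSubinterval_Icc (le_add_of_nonneg_right hu) (hy.trans inter_subset_right)) n
  rw [hdiam] at hcomp
  refine le_of_mul_le_mul_left ?_ hU0
  calc Metric.diam U * (u * E) = u * (E * Metric.diam U) := by ring
    _ ≤ u * penalizedLength S β η c x n U := by gcongr; exact hE x
    _ ≤ Metric.diam U * totalLength S' n (Icc y (y + u)) := hcomp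
    _ ≤ Metric.diam U * totalLength S' n (Icc A' B') := by
        gcongr
        exact totalLength_mono hS' n (hy.trans inter_subset_left) (Metric.isBounded_Icc A' B')

end Comparison

/-! ### Stability of positive pressure -/

section Stability

variable {m : ℕ} {s u : ℝ} {r : NNReal} {f g : Fin m → ℝ → ℝ} {l : Fin m → ℕ} {b : BSpace m l}
  {τ : Fin m → ℝ} {ρ : RSpace m l}

theorem exists_frequently_le_penalizedLength_of_pressure_nonneg [Nonempty (Fin m)] {σ : Type*}
    [Fintype σ] {β : σ → ℝ} {c : ℝ} (hr0 : 0 < r) (hr : r < 1) (hc0 : 0 < c) (hc : c < 1)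
    (hf : ∀ k, LipschitzWith r (f k))
    (hlow : ∀ k p q, p ≤ q → c * (q - p) ≤ Metric.diam (f k '' Icc p q))
    (huniq : ∀ j n, (fixingWords f (β j) n).card ≤ 1) (hs : 1 < s) (hp : 0 ≤ pressure f s) :
    ∃ L > 0, ∃ η > 0, ∀ u > 0, ∃ᶠ n : ℕ in atTop, ∃ U, IsSubinterval (suppInt f) U ∧
      0 < Metric.diam U ∧ Metric.diam U ≤ u ∧
      ∀ x, Real.exp (L * n) / 4 * Metric.diam U ≤ penalizedLength f β η c x n U := by
  have hf1 : ∀ k, LipschitzWith 1 (f k) := fun k => (hf k).weaken hr.le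
  obtain ⟨A, B, hAB, hsupp, hmaps⟩ := exists_suppInt_eq_Icc fun k => ⟨hr, hf k⟩
  rw [← hsupp] at hmaps
  obtain ⟨ε, hε, K, hK, hfreq⟩ :=
    exists_frequently_exp_mul_le_lengthGrowth hr0 hr hf hc0 hlow hAB hsupp hs hp
  obtain ⟨L, hL, hlower, hgrowth⟩ := exists_growth_rate_of_submultiplicative
    (lengthGrowth_nonneg f _) (lengthGrowth_add_le hf1 hmaps) hε hK hfreq
  exact ⟨L / 2, half_pos hL,
    frequently_exists_le_penalizedLength hr0 hr hc0 hc hf hmaps huniq hL hlower hgrowth⟩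

theorem pressure_pos_of_frequently_le_penalizedLength [Nonempty (Fin m)] {σ : Type*} [Fintype σ]
    {β : σ → ℝ} {c L η : ℝ} (hr : r < 1) (hc0 : 0 ≤ c) (hc1 : c ≤ 1)
    (hf : ∀ k, LipschitzWith r (f k)) (hg : ∀ k, LipschitzWith r (g k))
    (hfix : ¬ ∃ φ, ∀ k, f k φ = φ) (hfg : ∀ k x, dist (f k x) (g k x) ≤ (1 - r) * u)
    (hlow : ∀ k p q, p ≤ q → c * (q - p) ≤ Metric.diam (g k '' Icc p q))
    (hscale : HasCommonScaling f g β η (3 * u)) (hu : 0 < u)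
    (hu_diam : 4 * u ≤ Metric.diam (suppInt f)) (hL : 0 < L)
    (hfreq : ∃ᶠ n : ℕ in atTop, ∃ U, IsSubinterval (suppInt f) U ∧
      0 < Metric.diam U ∧ Metric.diam U ≤ u ∧
      ∀ x, Real.exp (L * n) / 4 * Metric.diam U ≤ penalizedLength f β η c x n U)
    (hs0 : 0 ≤ s) (hs1 : s ≤ 1) : 0 < pressure g s := by
  have hg1 : ∀ k, LipschitzWith 1 (g k) := fun k => (hg k).weaken hr.le
  obtain ⟨A, B, hAB, hA, -⟩ := exists_suppInt_eq_Icc fun k => ⟨hr, hf k⟩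
  obtain ⟨A', B', hAB', hA', hmaps⟩ := exists_suppInt_eq_Icc fun k => ⟨hr, hg k⟩
  have hsub := suppInt_subset_of_dist_le hfix hf hAB'.le hu.le hmaps hfg
  rw [hA] at hsub hu_diam hfreq
  rw [Real.diam_Icc hAB.le] at hu_diam
  refine pressure_pos_of_frequently_le_totalLength (K := u / 4) hg1
    (hA' ▸ Metric.isBounded_Icc A' B') hs0 hs1 (by positivity) hL ?_
  refine hfreq.mono ?_
  rintro n ⟨U, hU, hU0, hUu, hE⟩
  rw [hA', div_mul_eq_mul_div, mul_div_assoc]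
  exact mul_le_totalLength_of_le_penalizedLength hr.le hc0 hc1 hf hg1 hfg hlow hscale hu.le hu_diam
    hsub hU hU0 hUu hE

theorem hasCommonScaling_paramFun {b' : BSpace m l} {d D η : ℝ}
    (hbb : ∀ k j, dist (b k j) (b' k j) ≤ d) (hη : d + D ≤ η) (τ τ' : Fin m → ℝ)
    (ρ : RSpace m l) :
    HasCommonScaling (paramFun m l (b, τ, ρ)) (paramFun m l (b', τ', ρ))
      (fun j : Σ k, Fin (l k) => b j.1 j.2) η D := by
  intro k y hy
  have hy' : ∀ j, d + D < dist y (b k j) := fun j => hη.trans_lt (hy ⟨k, j⟩)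
  have hself : ∀ j, dist (b k j) (b k j) ≤ d := fun j =>
    (dist_self (b k j)).trans_le (dist_nonneg.trans (hbb k j))
  exact ⟨|ρ k (slopeIdx (b k) y)|, abs_nonneg _, fun U hU =>
    ⟨diam_plFun_image_of_dist_lt hself hy' hU, diam_plFun_image_of_dist_lt (hbb k) hy' hU⟩⟩

theorem exists_forall_dist_paramFun_le (hρ : ∀ k i, |ρ k i| ≤ 1) (b : BSpace m l)
    (τ : Fin m → ℝ) {e : ℝ} (he : 0 < e) :
    ∃ δ > 0, ∀ (b' : BSpace m l) (τ' : Fin m → ℝ), dist (b', τ') (b, τ) < δ →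
      (∀ k j, dist (b k j) (b' k j) ≤ e) ∧
      ∀ k x, dist (paramFun m l (b, τ, ρ) k x) (paramFun m l (b', τ', ρ) k x) ≤ e := by
  have hev : ∀ᶠ p : BSpace m l × (Fin m → ℝ) in nhds (b, τ),
      (∀ k j, dist (b k j) (p.1 k j) < e) ∧
      ∀ k, dist (τ k) (p.2 k) + 2 * ∑ j, dist (b k j) (p.1 k j) < e := by
    refine .and (eventually_all.2 fun k => eventually_all.2 fun j => ?_)
      (eventually_all.2 fun k => ?_)
    all_goals exact Continuous.tendsto' (by fun_prop) _ 0 (by simp) |>.eventually_lt_const he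
  obtain ⟨δ, hδ, hball⟩ := Metric.eventually_nhds_iff.1 hev
  refine ⟨δ, hδ, fun b' τ' hdist => ⟨fun k j => ((hball hdist).1 k j).le, fun k x => ?_⟩⟩
  exact (dist_plFun_le (hρ k) _ _ _ _ x).trans ((hball hdist).2 k).le

theorem exists_mem_Ioo_forall_le {ι : Type*} [Finite ι] {a b : ℝ} (hab : a < b) {v : ι → ℝ}
    (hv : ∀ i, v i < b) : ∃ x ∈ Ioo a b, ∀ i, v i ≤ x :=
  (Eventually.and (Ioo_mem_nhdsLT hab) (eventually_all.2 fun i =>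
    eventually_nhdsWithin_of_eventually_nhds (eventually_ge_nhds (hv i)))).exists

theorem exists_mem_Ioo_forall_ge {ι : Type*} [Finite ι] {a b : ℝ} (hab : a < b) {v : ι → ℝ}
    (hv : ∀ i, a < v i) : ∃ x ∈ Ioo a b, ∀ i, x ≤ v i :=
  (Eventually.and (Ioo_mem_nhdsGT hab) (eventually_all.2 fun i =>
    eventually_nhdsWithin_of_eventually_nhds (eventually_le_nhds (hv i)))).exists

theorem exists_contraction_ratio (hρ : ∀ k i, |ρ k i| < 1) :
    ∃ r : NNReal, 0 < r ∧ r < 1 ∧ ∀ k i, |ρ k i| ≤ r := by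
  obtain ⟨r, ⟨hr0, hr1⟩, hr⟩ := exists_mem_Ioo_forall_le zero_lt_one
    (v := fun q : Σ k, Fin (l k + 1) => |ρ q.1 q.2|) fun q => hρ q.1 q.2
  exact ⟨⟨r, hr0.le⟩, hr0, hr1, fun k i => hr ⟨k, i⟩⟩

theorem exists_expansion_constant (hρ : ∀ k i, ρ k i ≠ 0) :
    ∃ c ∈ Ioo (0 : ℝ) 1, ∀ (b : BSpace m l) (τ : Fin m → ℝ) k p q, p ≤ q →
      c * (q - p) ≤ Metric.diam (paramFun m l (b, τ, ρ) k '' Icc p q) := by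
  obtain ⟨c, hc, hcρ⟩ := exists_mem_Ioo_forall_ge zero_lt_one
    (v := fun q : Σ k, Fin (l k + 1) => |ρ q.1 q.2| / (l q.1 + 1)) fun q =>
      div_pos (abs_pos.2 (hρ q.1 q.2)) (by positivity)
  exact ⟨c, hc, fun b τ k p q hpq => mul_sub_le_diam_plFun_image
    (fun i => (le_div_iff₀ (by positivity)).1 (hcρ ⟨k, i⟩)) (b k) (τ k) hpq⟩

end Stability

theorem natDim_gt_one_stable_general {m : ℕ} {l : Fin m → ℕ} (hm : 2 ≤ m) {ρ t : RSpace m l}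
    {b : BSpace m l} {τ : Fin m → ℝ} (hρ : ∀ k i, ρ k i ≠ 0 ∧ |ρ k i| < 1)
    (hb : ∀ k, StrictMono (b k))
    (ht : ∀ k, IsIntercept (b k) (ρ k) (τ k) (t k))
    (hno : NoExactOverlap fun (q : Σ k, Fin (l k + 1)) x => ρ q.1 q.2 * x + t q.1 q.2)
    {s : ℝ} (hs : 1 < s) (hp : 0 ≤ pressure (paramFun m l (b, τ, ρ)) s) :
    ∃ δ > 0, ∀ (b' : BSpace m l) (τ' : Fin m → ℝ), dist (b', τ') (b, τ) < δ →
      ∀ s', 0 ≤ s' → s' ≤ 1 → 0 < pressure (paramFun m l (b', τ', ρ)) s' := by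
  have : Nonempty (Fin m) := ⟨⟨0, by omega⟩⟩
  obtain ⟨r, hr0, hr1, hr⟩ := exists_contraction_ratio fun k i => (hρ k i).2
  obtain ⟨c, ⟨hc0, hc1⟩, hlow⟩ := exists_expansion_constant fun k i => (hρ k i).1
  have hlip : ∀ b' τ' k, LipschitzWith r (paramFun m l (b', τ', ρ) k) := fun b' τ' k =>
    lipschitzWith_plFun (hr k) (b' k) (τ' k)
  obtain ⟨L, hL, η, hη, hfreq⟩ := exists_frequently_le_penalizedLength_of_pressure_nonneg
    (β := fun j : Σ k, Fin (l k) => b j.1 j.2) hr0 hr1 hc0 hc1 (hlip b τ) (hlow b τ)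
    (fun j => card_fixingWords_paramFun_le_one hb ht hno (b j.1 j.2)) hs hp
  have hfix := not_exists_common_fixedPoint hm hb ht hno
  obtain ⟨u, hu0, hu⟩ : ∃ u, 0 < u ∧ 4 * u ≤ η ∧
      4 * u ≤ Metric.diam (suppInt (paramFun m l (b, τ, ρ))) := by
    obtain ⟨A, B, hAB, hsupp, -⟩ := exists_suppInt_eq_Icc fun k => ⟨hr1, hlip b τ k⟩
    rw [hsupp, Real.diam_Icc hAB.le]
    exact ⟨min η (B - A) / 4, by have := sub_pos.2 hAB; positivity, by grind⟩
  have hr1' : 0 < 1 - (r : ℝ) := sub_pos.2 hr1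
  obtain ⟨δ, hδ, hclose⟩ := exists_forall_dist_paramFun_le (fun k i => (hρ k i).2.le) b τ
    (mul_pos hr1' hu0)
  refine ⟨δ, hδ, fun b' τ' hdist s' hs0 hs1 => ?_⟩
  obtain ⟨hbb, hff⟩ := hclose b' τ' hdist
  have hscale := hasCommonScaling_paramFun hbb (D := 3 * u) (η := η)
    (by nlinarith [r.coe_nonneg, hu.1]) τ τ' ρ
  exact pressure_pos_of_frequently_le_penalizedLength hr1 hc0.le hc1.le (hlip b τ) (hlip b' τ') hfix
    hff (hlow b' τ') hscale hu0 hu.2 hL (hfreq u hu0) hs0 hs1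

/-- Fix a type `ℓ` and a vector of slopes `ρ ∈ R^ℓ`.  Let
`(b, τ) ∈ B^ℓ × ℝ^m` be such that the self-similar IFS generated by `F^{(b,τ,ρ)}` satisfies
the Exponential Separation Condition and the natural dimension satisfies
`s_{(b,τ,ρ)} > 1`.  Then there exists `δ > 0` such that for every
`(b̂, τ̂) ∈ B^ℓ × ℝ^m` with `|(b̂, τ̂) - (b, τ)| < δ` one has `s_{(b̂,τ̂,ρ)} > 1`. -/
theorem natDim_gt_one_stable
    {m : ℕ} {l : Fin m → ℕ} (hm : 2 ≤ m)
    (ρ : RSpace m l)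
    (hρ : ∀ k i, ρ k i ≠ 0 ∧ |ρ k i| < 1)
    (hconsec : ∀ k (i : Fin (l k)), ρ k i.castSucc ≠ ρ k i.succ)
    (b : BSpace m l) (τ : Fin m → ℝ) (hb : ∀ k, StrictMono (b k))
    (hesc : ∃ t : (k : Fin m) → Fin (l k + 1) → ℝ,
      (∀ (k : Fin m) (i : Fin (l k + 1)) (x : ℝ),
        (∀ j : Fin (l k), (j : ℕ) < (i : ℕ) → b k j < x) →
        (∀ j : Fin (l k), (i : ℕ) ≤ (j : ℕ) → x < b k j) →
        paramFun m l (b, τ, ρ) k x = ρ k i * x + t k i) ∧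
      ESCfam (fun q : Σ k : Fin m, Fin (l k + 1) => ρ q.1 q.2)
             (fun q : Σ k : Fin m, Fin (l k + 1) => t q.1 q.2))
    (sF : ℝ) (hsF0 : 0 ≤ sF)
    (hsF : pressure (paramFun m l (b, τ, ρ)) sF = 0) (hsF1 : 1 < sF) :
    ∃ δ > (0 : ℝ), ∀ (b' : BSpace m l) (τ' : Fin m → ℝ),
      (∀ k, StrictMono (b' k)) →
      dist ((b', τ') : BSpace m l × (Fin m → ℝ)) (b, τ) < δ →
      ∀ s' : ℝ, 0 ≤ s' → pressure (paramFun m l (b', τ', ρ)) s' = 0 → 1 < s' := by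
  obtain ⟨t, ht, hsep⟩ := hesc
  obtain ⟨δ, hδ, hpos⟩ :=
    natDim_gt_one_stable_general hm hρ hb ht hsep.noExactOverlap hsF1 hsF.ge
  exact ⟨δ, hδ, fun b' τ' _ hdist s' hs' hp => not_le.1 fun hle =>
    (hpos b' τ' hdist s' hs' hle).ne' hp⟩

end
end

section
/- Let A, B, S : ℝ → ℝ be affine maps (each of the form x ↦ a·x + c). Suppose there exist points d, p ∈ ℝ with S(d) = p and A(p) = B(p) = d. Then B∘S∘A∘S = A∘S∘B∘S as functions on ℝ. -/
/-!
The maps `A ∘ S` and `B ∘ S` are affine and both fix `d`. The linear part of an affine map is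
multiplicative under composition, so the linear parts of their two composites agree, being scalars
on a line. The composites also agree at `d`, hence everywhere.
-/

open Function

section AffineSpace

variable {k V P : Type*} [Ring k] [AddCommGroup V] [Module k V] [AddTorsor V P]

theorem affineMap_commute_iff_commute_linear_of_isFixedPt {f g : P →ᵃ[k] P} {d : P}
    (hf : IsFixedPt f d) (hg : IsFixedPt g d) :
    Commute f g ↔ Commute f.linear g.linear where
  mp h := h.map AffineMap.linearHom
  mpr h := AffineMap.ext_linear h ((hf.comp hg).trans (hg.comp hf).symm)

end AffineSpace

section CommRing

variable {R : Type*} [CommRing R]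

theorem commute_module_end_self (f g : Module.End R R) : Commute f g := by
  refine LinearMap.ext_ring ?_
  calc
    f (g 1) = g 1 * f 1 := by rw [← smul_eq_mul, ← map_smul, smul_eq_mul, mul_one]
    _ = f 1 * g 1 := mul_comm _ _
    _ = g (f 1) := by rw [← smul_eq_mul, ← map_smul, smul_eq_mul, mul_one]

theorem affineMap_self_commute_of_isFixedPt {f g : R →ᵃ[R] R} {d : R}
    (hf : IsFixedPt f d) (hg : IsFixedPt g d) : Commute f g :=
  (affineMap_commute_iff_commute_linear_of_isFixedPt hf hg).mpr
    (commute_module_end_self f.linear g.linear)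

theorem exists_affineMap_coe_eq {f : R → R} (hf : ∃ a c : R, ∀ x, f x = a * x + c) :
    ∃ F : R →ᵃ[R] R, ⇑F = f := by
  obtain ⟨a, c, hf⟩ := hf
  exact ⟨a • AffineMap.id R R + AffineMap.const R R c, funext fun x ↦ (hf x).symm⟩

theorem affine_commuting_identity_general (A B S : R → R)
    (hA : ∃ a c : R, ∀ x, A x = a * x + c)
    (hB : ∃ a c : R, ∀ x, B x = a * x + c)
    (hS : ∃ a c : R, ∀ x, S x = a * x + c)
    (d p : R) (hSd : S d = p) (hAp : A p = d) (hBp : B p = d) :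
    B ∘ S ∘ A ∘ S = A ∘ S ∘ B ∘ S := by
  obtain ⟨A, rfl⟩ := exists_affineMap_coe_eq hA
  obtain ⟨B, rfl⟩ := exists_affineMap_coe_eq hB
  obtain ⟨S, rfl⟩ := exists_affineMap_coe_eq hS
  have hAS : IsFixedPt (A.comp S) d := (congrArg A hSd).trans hAp
  have hBS : IsFixedPt (B.comp S) d := (congrArg B hSd).trans hBp
  have hcomm : B.comp S * A.comp S = A.comp S * B.comp S :=
    affineMap_self_commute_of_isFixedPt hBS hAS
  exact congrArg DFunLike.coe hcomm

end CommRing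

/-- Let `A, B, S : ℝ → ℝ` be affine maps. Suppose there are points
`d, p ∈ ℝ` with `S d = p` and `A p = B p = d`. Then `B ∘ S ∘ A ∘ S = A ∘ S ∘ B ∘ S`
as functions on `ℝ`. -/
theorem affine_commuting_identity
    (A B S : ℝ → ℝ)
    (hA : ∃ a c : ℝ, ∀ x, A x = a * x + c)
    (hB : ∃ a c : ℝ, ∀ x, B x = a * x + c)
    (hS : ∃ a c : ℝ, ∀ x, S x = a * x + c)
    (d p : ℝ)
    (hSd : S d = p) (hAp : A p = d) (hBp : B p = d) :
    B ∘ S ∘ A ∘ S = A ∘ S ∘ B ∘ S :=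
  affine_commuting_identity_general A B S hA hB hS d p hSd hAp hBp
end

section
/- Let f_1(x) = (2/5)x for x ≤ 0 and f_1(x) = (1/5)x for x ≥ 0, let f_2(x) = x/3, and let F = {f_1, f_2} with natural pressure Φ. Then for every s > 0, Φ(s) > log((1/3)^s + (1/5)^s). Consequently, the natural dimension s_F of F is strictly greater than the unique r > 0 with (1/3)^r + (1/5)^r = 1; since for every ε > 0 the CPLIFS F̂_ε = {f_1, x ↦ x/3 + ε} has natural dimension exactly r, the natural dimension is not continuous at F (the gap s_F − r is independent of ε). -/
open Set Filter MeasureTheory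

noncomputable section

/-- The piecewise linear map `f₁(x) = (2/5)x` for `x ≤ 0` and `f₁(x) = (1/5)x` for
`x ≥ 0`. -/
def g1 : ℝ → ℝ := fun x => if x ≤ 0 then 2 / 5 * x else 1 / 5 * x

/-! Suppose every `f_k` is `p_k`-Lipschitz on the supporting interval `I`, and on some invariant set
`J ⊆ I` with at least two points it contracts distances by no more than `p_k`. Then `|I_w|` is
comparable to `∏ p_{w_i}` uniformly in the word `w`, so `Φ(s) = log ∑ p_kˢ`. For
`{f₁, x ↦ x/3 + ε}` the position of `I` decides which slope of `f₁` plays the role of `p₁`. If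
`ε = 0`, then `I = [-1/2, 1/2]`, its left half `J` is invariant, and `p₁ = 2/5`. If `ε > 0`, then
`I = J = [0, 3ε/2]` is spanned by the fixed points of the two maps, so `p₁ = 1/5`. -/

section GrowthRates

theorem tendsto_inv_mul_log_of_le_of_le {u : ℕ → ℝ} {A B S : ℝ} (hA : 0 < A) (hS : 0 < S)
    (hlow : ∀ n, A * S ^ n ≤ u n) (hup : ∀ n, u n ≤ B * S ^ n) :
    Tendsto (fun n : ℕ => (n : ℝ)⁻¹ * Real.log (u n)) atTop (nhds (Real.log S)) := by
  have hu : ∀ n, 0 < u n := fun n => (by positivity : 0 < A * S ^ n).trans_le (hlow n)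
  have hB : 0 < B := by simpa using (hu 0).trans_le (hup 0)
  have log_geometric : ∀ {D : ℝ}, 0 < D → ∀ n : ℕ,
      Real.log (D * S ^ n) = Real.log D + n * Real.log S := fun hD n => by
    rw [Real.log_mul hD.ne' (pow_pos hS n).ne', Real.log_pow]
  have limit : ∀ {D : ℝ}, 0 < D →
      Tendsto (fun n : ℕ => (n : ℝ)⁻¹ * Real.log (D * S ^ n)) atTop (nhds (Real.log S)) := by
    intro D hD
    have h : Tendsto (fun n : ℕ => (n : ℝ)⁻¹ * Real.log D + Real.log S) atTop
        (nhds (Real.log S)) := by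
      simpa using (tendsto_inv_atTop_nhds_zero_nat.mul_const (Real.log D)).add_const (Real.log S)
    refine h.congr' ?_
    filter_upwards [eventually_ne_atTop 0] with n hn
    rw [log_geometric hD]
    field_simp
  refine tendsto_of_tendsto_of_tendsto_of_le_of_le (limit hA) (limit hB) (fun n => ?_) fun n => ?_
  · exact mul_le_mul_of_nonneg_left (Real.log_le_log (by positivity) (hlow n)) (by positivity)
  · exact mul_le_mul_of_nonneg_left (Real.log_le_log (hu n) (hup n)) (by positivity)

theorem exists_mul_rpow_le_and_le_mul_rpow {c C : ℝ} (hc : 0 < c) (hC : 0 < C) (s : ℝ) :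
    ∃ A B : ℝ, 0 < A ∧ ∀ x y : ℝ, 0 < x → c * x ≤ y → y ≤ C * x →
      A * x ^ s ≤ y ^ s ∧ y ^ s ≤ B * x ^ s := by
  rcases le_total 0 s with hs | hs
  · refine ⟨c ^ s, C ^ s, by positivity, fun x y hx hlow hup => ?_⟩
    have hy : 0 < y := (mul_pos hc hx).trans_le hlow
    rw [← Real.mul_rpow hc.le hx.le, ← Real.mul_rpow hC.le hx.le]
    exact ⟨Real.rpow_le_rpow (by positivity) hlow hs, Real.rpow_le_rpow hy.le hup hs⟩
  · refine ⟨C ^ s, c ^ s, by positivity, fun x y hx hlow hup => ?_⟩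
    have hy : 0 < y := (mul_pos hc hx).trans_le hlow
    rw [← Real.mul_rpow hc.le hx.le, ← Real.mul_rpow hC.le hx.le]
    exact ⟨Real.rpow_le_rpow_of_nonpos hy hup hs,
      Real.rpow_le_rpow_of_nonpos (by positivity) hlow hs⟩

theorem sum_prod_map_ofFn_rpow {ι : Type*} [Fintype ι] {p : ι → ℝ} (hp : ∀ k, 0 ≤ p k) (s : ℝ)
    (n : ℕ) : ∑ w : Fin n → ι, ((List.ofFn w).map p).prod ^ s = (∑ k, p k ^ s) ^ n := by
  classical
  rw [Fintype.sum_pow]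
  refine Finset.sum_congr rfl fun w _ => ?_
  rw [List.map_ofFn, List.prod_ofFn, Real.finsetProd_rpow _ _ fun i _ => hp (w i)]
  rfl

end GrowthRates

section Words

variable {ι : Type*} {f : ι → ℝ → ℝ} {p : ι → ℝ} {J : Set ℝ}

theorem prod_map_pos (hp : ∀ k, 0 < p k) (w : List ι) : 0 < (w.map p).prod :=
  List.prod_pos (by simpa using fun k _ => hp k)

theorem compFam_cons_apply (f : ι → ℝ → ℝ) (k : ι) (w : List ι) (x : ℝ) :
    compFam f (k :: w) x = f k (compFam f w x) := rfl

theorem mapsTo_compFam_s13 (hJ : ∀ k, MapsTo (f k) J J) (w : List ι) : MapsTo (compFam f w) J J := by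
  induction w with
  | nil => exact mapsTo_id J
  | cons k w ih => exact (hJ k).comp ih

theorem dist_compFam_le_s13 (hp : ∀ k, 0 ≤ p k) (hJ : ∀ k, MapsTo (f k) J J)
    (hf : ∀ k, ∀ x ∈ J, ∀ y ∈ J, dist (f k x) (f k y) ≤ p k * dist x y) (w : List ι)
    {x y : ℝ} (hx : x ∈ J) (hy : y ∈ J) :
    dist (compFam f w x) (compFam f w y) ≤ (w.map p).prod * dist x y := by
  induction w with
  | nil => simp [compFam]
  | cons k w ih =>
    calc dist (compFam f (k :: w) x) (compFam f (k :: w) y)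
        ≤ p k * dist (compFam f w x) (compFam f w y) :=
          hf k _ (mapsTo_compFam_s13 hJ w hx) _ (mapsTo_compFam_s13 hJ w hy)
      _ ≤ p k * ((w.map p).prod * dist x y) := mul_le_mul_of_nonneg_left ih (hp k)
      _ = ((k :: w).map p).prod * dist x y := by rw [List.map_cons, List.prod_cons, mul_assoc]

theorem le_dist_compFam (hp : ∀ k, 0 ≤ p k) (hJ : ∀ k, MapsTo (f k) J J)
    (hf : ∀ k, ∀ x ∈ J, ∀ y ∈ J, p k * dist x y ≤ dist (f k x) (f k y)) (w : List ι)
    {x y : ℝ} (hx : x ∈ J) (hy : y ∈ J) :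
    (w.map p).prod * dist x y ≤ dist (compFam f w x) (compFam f w y) := by
  induction w with
  | nil => simp [compFam]
  | cons k w ih =>
    calc ((k :: w).map p).prod * dist x y
        = p k * ((w.map p).prod * dist x y) := by rw [List.map_cons, List.prod_cons, mul_assoc]
      _ ≤ p k * dist (compFam f w x) (compFam f w y) := mul_le_mul_of_nonneg_left ih (hp k)
      _ ≤ dist (compFam f (k :: w) x) (compFam f (k :: w) y) :=
          hf k _ (mapsTo_compFam_s13 hJ w hx) _ (mapsTo_compFam_s13 hJ w hy)

end Words

section Pressure

variable {m : ℕ} {f : Fin m → ℝ → ℝ} {p : Fin m → ℝ}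

/-- The cylinder interval `I_w = f_{i₁} ∘ ⋯ ∘ f_{iₙ} (I)` of the word `w = (i₁, …, iₙ)`, whose
length enters `pressure`; words are lists, so that estimates go by induction on `w`. -/
def cylinderInterval (f : Fin m → ℝ → ℝ) (w : List (Fin m)) : Set ℝ :=
  compFam f w '' suppInt f

theorem pressure_eq_log_of_diam_cylinderInterval [NeZero m] (hp : ∀ k, 0 < p k) {c C : ℝ}
    (hc : 0 < c) (hlow : ∀ w, c * (w.map p).prod ≤ Metric.diam (cylinderInterval f w))
    (hup : ∀ w, Metric.diam (cylinderInterval f w) ≤ C * (w.map p).prod) (s : ℝ) :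
    pressure f s = Real.log (∑ k, p k ^ s) := by
  have hC : 0 < C := hc.trans_le (by simpa using (hlow []).trans (hup []))
  obtain ⟨A, B, hA, hAB⟩ := exists_mul_rpow_le_and_le_mul_rpow hc hC s
  have diam_rpow (w : List (Fin m)) := hAB _ _ (prod_map_pos hp w) (hlow w) (hup w)
  have hS : 0 < ∑ k, p k ^ s :=
    Finset.sum_pos (fun k _ => Real.rpow_pos_of_pos (hp k) s) Finset.univ_nonempty
  refine (tendsto_inv_mul_log_of_le_of_le (B := B) hA hS (fun n => ?_) fun n => ?_).limsup_eq
  · rw [← sum_prod_map_ofFn_rpow fun k => (hp k).le, Finset.mul_sum]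
    exact Finset.sum_le_sum fun w _ => (diam_rpow (List.ofFn w)).1
  · rw [← sum_prod_map_ofFn_rpow fun k => (hp k).le, Finset.mul_sum]
    exact Finset.sum_le_sum fun w _ => (diam_rpow (List.ofFn w)).2

theorem pressure_eq_log_of_invariant_subset [NeZero m] (hp : ∀ k, 0 < p k)
    (hbdd : Bornology.IsBounded (suppInt f)) (hI : ∀ k, MapsTo (f k) (suppInt f) (suppInt f))
    (hlip : ∀ k, ∀ x ∈ suppInt f, ∀ y ∈ suppInt f, dist (f k x) (f k y) ≤ p k * dist x y)
    {J : Set ℝ} (hJI : J ⊆ suppInt f) (hJ : J.Nontrivial) (hJmaps : ∀ k, MapsTo (f k) J J)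
    (hscale : ∀ k, ∀ x ∈ J, ∀ y ∈ J, p k * dist x y ≤ dist (f k x) (f k y)) (s : ℝ) :
    pressure f s = Real.log (∑ k, p k ^ s) := by
  obtain ⟨x, hx, y, hy, hxy⟩ := hJ
  have hp0 : ∀ k, 0 ≤ p k := fun k => (hp k).le
  have dist_le : ∀ w, ∀ u ∈ cylinderInterval f w, ∀ v ∈ cylinderInterval f w,
      dist u v ≤ Metric.diam (suppInt f) * (w.map p).prod := by
    rintro w _ ⟨u, hu, rfl⟩ _ ⟨v, hv, rfl⟩
    rw [mul_comm]
    exact (dist_compFam_le_s13 hp0 hI hlip w hu hv).trans <|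
      mul_le_mul_of_nonneg_left (Metric.dist_le_diam_of_mem hbdd hu hv) (prod_map_pos hp w).le
  refine pressure_eq_log_of_diam_cylinderInterval (C := Metric.diam (suppInt f)) hp
    (dist_pos.2 hxy) (fun w => ?_) (fun w => ?_) s
  · rw [mul_comm]
    exact (le_dist_compFam hp0 hJmaps hscale w hx hy).trans <|
      Metric.dist_le_diam_of_mem (Metric.isBounded_iff.2 ⟨_, fun u hu v hv => dist_le w u hu v hv⟩)
        (mem_image_of_mem _ (hJI hx)) (mem_image_of_mem _ (hJI hy))
  · exact Metric.diam_le_of_forall_dist_le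
      (mul_nonneg Metric.diam_nonneg (prod_map_pos hp w).le) (dist_le w)

end Pressure

section SupportingInterval

open Function NNReal

theorem mem_of_isFixedPt_of_mapsTo {X : Type*} [MetricSpace X] [CompleteSpace X] {K : ℝ≥0}
    {g : X → X} (hg : ContractingWith K g) {φ : X} (hφ : IsFixedPt g φ) {J : Set X}
    (hJ : IsClosed J) (hne : J.Nonempty) (hmaps : MapsTo g J J) : φ ∈ J := by
  obtain ⟨x, hx⟩ := hne
  have : Nonempty X := ⟨x⟩
  rw [hg.fixedPoint_unique hφ]
  exact hJ.mem_of_tendsto (hg.tendsto_iterate_fixedPoint x)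
    (Eventually.of_forall fun n => hmaps.iterate n hx)

variable {m : ℕ} {f : Fin m → ℝ → ℝ}

theorem suppInt_of_common_isFixedPt {K : ℝ≥0} {i : Fin m} (hi : ContractingWith K (f i)) {φ : ℝ}
    (hφ : ∀ k, IsFixedPt (f k) φ) : suppInt f = Icc (φ - 1 / 2) (φ + 1 / 2) := by
  have h : ∃ φ : ℝ, ∀ k, f k φ = φ := ⟨φ, hφ⟩
  have hchoose : h.choose = φ := hi.fixedPoint_unique' (h.choose_spec i) (hφ i)
  rw [suppInt, dif_pos h, hchoose]

theorem suppInt_of_isFixedPt_endpoints {K L : ℝ≥0} {i j : Fin m} {a b : ℝ} (hab : a < b)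
    (hi : ContractingWith K (f i)) (hj : ContractingWith L (f j)) (ha : IsFixedPt (f i) a)
    (hb : IsFixedPt (f j) b) (hmaps : ∀ k, MapsTo (f k) (Icc a b) (Icc a b)) :
    suppInt f = Icc a b := by
  have no_common : ¬ ∃ φ : ℝ, ∀ k, f k φ = φ := by
    rintro ⟨φ, hφ⟩
    have hφa : φ = a := hi.fixedPoint_unique' (hφ i) ha
    have hφb : φ = b := hj.fixedPoint_unique' (hφ j) hb
    exact hab.ne (hφa.symm.trans hφb)
  rw [suppInt, dif_neg no_common]
  refine (sInter_subset_of_mem ?_).antisymm (subset_sInter ?_)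
  · exact ⟨nonempty_Icc.2 hab.le, ⟨a, b, rfl⟩, fun k => (hmaps k).image_subset⟩
  · rintro _ ⟨hne, ⟨a', b', rfl⟩, hinv⟩
    have hmaps' : ∀ k, MapsTo (f k) (Icc a' b') (Icc a' b') :=
      fun k => mapsTo_iff_image_subset.2 (hinv k)
    exact Icc_subset_Icc (mem_of_isFixedPt_of_mapsTo hi ha isClosed_Icc hne (hmaps' i)).1
      (mem_of_isFixedPt_of_mapsTo hj hb isClosed_Icc hne (hmaps' j)).2

end SupportingInterval

section Example

theorem dist_g1_of_nonpos {x y : ℝ} (hx : x ≤ 0) (hy : y ≤ 0) :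
    dist (g1 x) (g1 y) = 2 / 5 * dist x y := by
  rw [g1, g1, if_pos hx, if_pos hy, Real.dist_eq, Real.dist_eq, ← mul_sub, abs_mul,
    abs_of_pos (by norm_num)]

theorem g1_of_nonneg {x : ℝ} (hx : 0 ≤ x) : g1 x = 1 / 5 * x := by
  rcases hx.eq_or_lt with rfl | hx
  · simp [g1]
  · exact if_neg hx.not_ge

theorem dist_g1_of_nonneg {x y : ℝ} (hx : 0 ≤ x) (hy : 0 ≤ y) :
    dist (g1 x) (g1 y) = 1 / 5 * dist x y := by
  rw [g1_of_nonneg hx, g1_of_nonneg hy, Real.dist_eq, Real.dist_eq, ← mul_sub, abs_mul,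
    abs_of_pos (by norm_num)]

theorem dist_g1_le (x y : ℝ) : dist (g1 x) (g1 y) ≤ 2 / 5 * dist x y := by
  have h₁ := le_abs_self (x - y)
  have h₂ := neg_abs_le (x - y)
  rw [Real.dist_eq, Real.dist_eq, abs_le]
  unfold g1
  split_ifs <;> constructor <;> linarith

theorem contractingWith_g1 : ContractingWith (2 / 5) g1 :=
  ⟨by rw [← NNReal.coe_lt_coe]; norm_num, LipschitzWith.of_dist_le_mul dist_g1_le⟩

theorem mapsTo_g1_Icc {a b : ℝ} (ha : a ≤ 0) (hb : 0 ≤ b) : MapsTo g1 (Icc a b) (Icc a b) := by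
  rintro x ⟨hax, hxb⟩
  unfold g1
  split_ifs <;> constructor <;> linarith

theorem dist_div_three_add (ε x y : ℝ) : dist (x / 3 + ε) (y / 3 + ε) = 1 / 3 * dist x y := by
  rw [dist_add_right, Real.dist_eq, Real.dist_eq, ← sub_div, abs_div, Nat.abs_ofNat]
  ring

theorem contractingWith_div_three_add (ε : ℝ) : ContractingWith (1 / 3) fun x : ℝ => x / 3 + ε :=
  ⟨by rw [← NNReal.coe_lt_coe]; norm_num,
    LipschitzWith.of_dist_le_mul fun x y => by simpa using (dist_div_three_add ε x y).le⟩

theorem mapsTo_div_three_Icc {a b : ℝ} (ha : a ≤ 0) (hb : 0 ≤ b) :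
    MapsTo (fun x : ℝ => x / 3) (Icc a b) (Icc a b) := by
  rintro x ⟨hax, hxb⟩
  constructor <;> linarith

theorem mapsTo_div_three_add_Icc {ε : ℝ} (hε : 0 ≤ ε) :
    MapsTo (fun x => x / 3 + ε) (Icc 0 (3 / 2 * ε)) (Icc 0 (3 / 2 * ε)) := by
  rintro x ⟨hx₀, hx₁⟩
  constructor <;> linarith

theorem suppInt_g1_div_three :
    suppInt ![g1, fun x => x / 3] = Icc (-(1 / 2)) (1 / 2) := by
  have common_fixed : ∀ k, Function.IsFixedPt ((![g1, fun x => x / 3] : Fin 2 → ℝ → ℝ) k) 0 :=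
    Fin.forall_fin_two.2 ⟨by simp [Function.IsFixedPt, g1], by simp [Function.IsFixedPt]⟩
  rw [suppInt_of_common_isFixedPt (i := 0) contractingWith_g1 common_fixed, zero_sub, zero_add]

theorem suppInt_g1_div_three_add {ε : ℝ} (hε : 0 < ε) :
    suppInt ![g1, fun x => x / 3 + ε] = Icc 0 (3 / 2 * ε) := by
  have fixed_right : Function.IsFixedPt (fun x => x / 3 + ε) (3 / 2 * ε) := by
    unfold Function.IsFixedPt
    ring
  exact suppInt_of_isFixedPt_endpoints (i := 0) (j := 1) (by positivity) contractingWith_g1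
    (contractingWith_div_three_add ε) (by simp [Function.IsFixedPt, g1]) fixed_right
    (Fin.forall_fin_two.2 ⟨mapsTo_g1_Icc le_rfl (by positivity), mapsTo_div_three_add_Icc hε.le⟩)

theorem pressure_g1_div_three (s : ℝ) :
    pressure ![g1, fun x => x / 3] s = Real.log ((2 / 5 : ℝ) ^ s + (1 / 3 : ℝ) ^ s) := by
  have dist_div_three (x y : ℝ) : dist (x / 3) (y / 3) = 1 / 3 * dist x y := by
    simpa only [add_zero] using dist_div_three_add 0 x y
  suffices h : pressure ![g1, fun x => x / 3] s = Real.log (∑ k, ![2 / 5, 1 / 3] k ^ s) by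
    rwa [Fin.sum_univ_two] at h
  apply pressure_eq_log_of_invariant_subset (J := Icc (-(1 / 2)) 0)
  all_goals try rw [suppInt_g1_div_three]
  case hp => exact Fin.forall_fin_two.2 ⟨by norm_num, by norm_num⟩
  case hbdd => exact Metric.isBounded_Icc _ _
  case hI =>
    exact Fin.forall_fin_two.2 ⟨mapsTo_g1_Icc (by norm_num) (by norm_num),
      mapsTo_div_three_Icc (by norm_num) (by norm_num)⟩
  case hlip =>
    exact Fin.forall_fin_two.2
      ⟨fun x _ y _ => dist_g1_le x y, fun x _ y _ => (dist_div_three x y).le⟩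
  case hJI => exact Icc_subset_Icc_right (by norm_num)
  case hJ => exact ⟨-(1 / 2), by norm_num, 0, by norm_num, by norm_num⟩
  case hJmaps =>
    exact Fin.forall_fin_two.2 ⟨mapsTo_g1_Icc (by norm_num) le_rfl,
      mapsTo_div_three_Icc (by norm_num) le_rfl⟩
  case hscale =>
    exact Fin.forall_fin_two.2 ⟨fun x hx y hy => (dist_g1_of_nonpos hx.2 hy.2).ge,
      fun x _ y _ => (dist_div_three x y).ge⟩

theorem pressure_g1_div_three_add {ε : ℝ} (hε : 0 < ε) (s : ℝ) :
    pressure ![g1, fun x => x / 3 + ε] s = Real.log ((1 / 3 : ℝ) ^ s + (1 / 5 : ℝ) ^ s) := by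
  have hb : 0 < 3 / 2 * ε := by positivity
  have invariant : ∀ k, MapsTo ((![g1, fun x => x / 3 + ε] : Fin 2 → ℝ → ℝ) k)
      (Icc 0 (3 / 2 * ε)) (Icc 0 (3 / 2 * ε)) :=
    Fin.forall_fin_two.2 ⟨mapsTo_g1_Icc le_rfl hb.le, mapsTo_div_three_add_Icc hε.le⟩
  suffices h : pressure ![g1, fun x => x / 3 + ε] s = Real.log (∑ k, ![1 / 5, 1 / 3] k ^ s) by
    rwa [Fin.sum_univ_two, add_comm] at h
  apply pressure_eq_log_of_invariant_subset (J := Icc 0 (3 / 2 * ε))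
  all_goals try rw [suppInt_g1_div_three_add hε]
  case hp => exact Fin.forall_fin_two.2 ⟨by norm_num, by norm_num⟩
  case hbdd => exact Metric.isBounded_Icc _ _
  case hI => exact invariant
  case hlip =>
    exact Fin.forall_fin_two.2 ⟨fun x hx y hy => (dist_g1_of_nonneg hx.1 hy.1).le,
      fun x _ y _ => (dist_div_three_add ε x y).le⟩
  case hJ => exact ⟨0, left_mem_Icc.2 hb.le, 3 / 2 * ε, right_mem_Icc.2 hb.le, hb.ne⟩
  case hJmaps => exact invariant
  case hscale =>
    exact Fin.forall_fin_two.2 ⟨fun x hx y hy => (dist_g1_of_nonneg hx.1 hy.1).ge,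
      fun x _ y _ => (dist_div_three_add ε x y).ge⟩

theorem rpow_third_add_fifth_lt {s : ℝ} (hs : 0 < s) :
    (1 / 3 : ℝ) ^ s + (1 / 5 : ℝ) ^ s < (2 / 5 : ℝ) ^ s + (1 / 3 : ℝ) ^ s := by
  rw [add_comm]
  exact add_lt_add_left (Real.rpow_lt_rpow (by norm_num) (by norm_num) hs) _

end Example

/-- **Example pm49.** Let `F = {f₁, x ↦ x/3}` with natural pressure `Φ`.
Then (i) for every `s > 0`, `Φ(s) > log ((1/3)ˢ + (1/5)ˢ)`; (ii) consequently the natural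
dimension `s_F` of `F` is strictly greater than the unique `r > 0` with
`(1/3)ʳ + (1/5)ʳ = 1`; and (iii) for every `ε > 0` the perturbed CPLIFS
`F̂_ε = {f₁, x ↦ x/3 + ε}` has natural dimension exactly `r`, so the natural dimension is
not continuous at `F` (the gap `s_F - r` is independent of `ε`). -/
theorem example_natural_dimension_discontinuous :
    (∀ s : ℝ, 0 < s →
      Real.log ((1 / 3 : ℝ) ^ s + (1 / 5 : ℝ) ^ s) <
        pressure (![g1, fun x => x / 3] : Fin 2 → ℝ → ℝ) s) ∧
    (∀ sF : ℝ, 0 ≤ sF →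
      pressure (![g1, fun x => x / 3] : Fin 2 → ℝ → ℝ) sF = 0 →
      ∀ r : ℝ, 0 < r → (1 / 3 : ℝ) ^ r + (1 / 5 : ℝ) ^ r = 1 → r < sF) ∧
    (∀ ε : ℝ, 0 < ε → ∀ s : ℝ, 0 ≤ s →
      pressure (![g1, fun x => x / 3 + ε] : Fin 2 → ℝ → ℝ) s = 0 →
      (1 / 3 : ℝ) ^ s + (1 / 5 : ℝ) ^ s = 1) := by
  refine ⟨fun s hs => ?_, fun sF _ hsF r hr hr_eq => ?_, fun ε hε s _ hs => ?_⟩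
  · rw [pressure_g1_div_three]
    exact Real.log_lt_log (by positivity) (rpow_third_add_fifth_lt hs)
  · rw [pressure_g1_div_three] at hsF
    have hsF_eq : (2 / 5 : ℝ) ^ sF + (1 / 3 : ℝ) ^ sF = 1 :=
      Real.eq_one_of_pos_of_log_eq_zero (by positivity) hsF
    have anti : Antitone fun s : ℝ => (2 / 5 : ℝ) ^ s + (1 / 3 : ℝ) ^ s :=
      (Real.antitone_rpow_of_base_le_one (by norm_num) (by norm_num)).add
        (Real.antitone_rpow_of_base_le_one (by norm_num) (by norm_num))
    exact anti.reflect_lt (by linarith [rpow_third_add_fifth_lt hr])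
  · rw [pressure_g1_div_three_add hε] at hs
    exact Real.eq_one_of_pos_of_log_eq_zero (by positivity) hs

end
end
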